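/- Let K ⊂ ℝ^3 be a convex body, H a plane, and p an interior point of K not lying on any plane of symmetry of K parallel to H. Suppose p is a Larman point of K but not a revolution point, and for every plane Π through p the section Π ∩ K has a line of symmetry parallel to H. Then K is an ellipsoid of revolution whose axis of revolution is perpendicular to H. -/

import Mathlib

noncomputable section

open Metric Set MeasureTheory

/-- Euclidean n-space. -/
abbrev Euc (n : ℕ) := EuclideanSpace ℝ (Fin n)

/-- A convex body: compact, convex, with nonempty interior. -/
def IsConvexBody {n : ℕ} (K : Set (Euc n)) : Prop :=
  IsCompact K ∧ Convex ℝ K ∧ (interior K).Nonempty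

/-- `f` is the (orthogonal) reflection of the space with fixed-point set the affine
subspace `A`: an involutive isometry whose fixed points are exactly `A`. -/
def IsReflectionFix {n : ℕ} (f : Euc n → Euc n) (A : AffineSubspace ℝ (Euc n)) : Prop :=
  Isometry f ∧ f ∘ f = id ∧ {x | f x = x} = (A : Set (Euc n))

/-- `A` is a plane of symmetry of the set `K`. -/
def IsSymmetryPlane {n : ℕ} (K : Set (Euc n)) (A : AffineSubspace ℝ (Euc n)) : Prop :=
  ∃ f : Euc n → Euc n, IsReflectionFix f A ∧ f '' K = K

/-- `L` is a plane of symmetry of the set `s` within the flat `P`: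
some involutive isometry of the ambient space preserves `P`, has exactly `L` as
fixed-point set inside `P`, and maps `s` onto itself. -/
def IsSymmPlaneOfIn {n : ℕ} (s : Set (Euc n)) (P L : AffineSubspace ℝ (Euc n)) : Prop :=
  L ≤ P ∧ ∃ f : Euc n → Euc n, Isometry f ∧ f ∘ f = id ∧
    f '' (P : Set (Euc n)) = (P : Set (Euc n)) ∧
    {x ∈ (P : Set (Euc n)) | f x = x} = (L : Set (Euc n)) ∧ f '' s = s

/-- `L` is a plane of symmetry of the section `P ∩ K` within the flat `P`. -/
def IsSectionSymmPlane {n : ℕ} (K : Set (Euc n)) (P L : AffineSubspace ℝ (Euc n)) : Prop :=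
  IsSymmPlaneOfIn ((P : Set (Euc n)) ∩ K) P L

/-- A hyperplane: a nonempty affine subspace whose direction has dimension `n - 1`. -/
def IsHyperplane {n : ℕ} (A : AffineSubspace ℝ (Euc n)) : Prop :=
  (A : Set (Euc n)).Nonempty ∧ Module.finrank ℝ A.direction = n - 1

/-- A rotation about the affine subspace `L`: an affine isometry fixing `L`
pointwise whose linear part has determinant one (orientation preserving). -/
def IsRotationAbout {n : ℕ} (f : Euc n ≃ᵃⁱ[ℝ] Euc n) (L : AffineSubspace ℝ (Euc n)) : Prop :=
  (∀ x ∈ L, f x = x) ∧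
    LinearMap.det (f.linearIsometryEquiv.toLinearEquiv : Euc n →ₗ[ℝ] Euc n) = 1

/-- A body of revolution with axis the line `L`. -/
def IsRevolutionBody {n : ℕ} (K : Set (Euc n)) (L : AffineSubspace ℝ (Euc n)) : Prop :=
  IsConvexBody K ∧ (L : Set (Euc n)).Nonempty ∧ Module.finrank ℝ L.direction = 1 ∧
    ∀ f : Euc n ≃ᵃⁱ[ℝ] Euc n, IsRotationAbout f L → f '' K = K

/-- A `k`-dimensional ellipsoid: affine image of a `k`-dimensional unit ball. -/
def IsEllipsoidOfDim {n : ℕ} (k : ℕ) (s : Set (Euc n)) : Prop :=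
  ∃ (T : Euc n ≃ᵃ[ℝ] Euc n) (V : Submodule ℝ (Euc n)), Module.finrank ℝ V = k ∧
    s = T '' (closedBall 0 1 ∩ (V : Set (Euc n)))

/-- The shadow boundary of `K` with respect to the direction submodule `D`:
the union of the touching sets of all supporting flats of `K` with direction `D`. -/
def shadowBoundary {n : ℕ} (K : Set (Euc n)) (D : Submodule ℝ (Euc n)) : Set (Euc n) :=
  ⋃ l ∈ {l : AffineSubspace ℝ (Euc n) | l.direction = D ∧
      ((l : Set (Euc n)) ∩ K).Nonempty ∧ (l : Set (Euc n)) ∩ interior K = ∅},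
    ((l : Set (Euc n)) ∩ K)

/-- `p` is a Larman point of `K`: every hyperplane section of `K` through `p` has
an `(n-2)`-plane of symmetry. -/
def IsLarmanPoint {n : ℕ} (K : Set (Euc n)) (p : Euc n) : Prop :=
  p ∈ interior K ∧ ∀ P : AffineSubspace ℝ (Euc n), IsHyperplane P → p ∈ P →
    ∃ L : AffineSubspace ℝ (Euc n), Module.finrank ℝ L.direction = n - 2 ∧
      IsSectionSymmPlane K P L

/-- `p` is a revolution point of `K`: every hyperplane section of `K` through `p` has
an `(n-2)`-plane of symmetry containing `p`. -/
def IsRevolutionPoint {n : ℕ} (K : Set (Euc n)) (p : Euc n) : Prop :=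
  p ∈ interior K ∧ ∀ P : AffineSubspace ℝ (Euc n), IsHyperplane P → p ∈ P →
    ∃ L : AffineSubspace ℝ (Euc n), Module.finrank ℝ L.direction = n - 2 ∧ p ∈ L ∧
      IsSectionSymmPlane K P L

/-!
Choose coordinates `E × ℝ` with origin `p` and `E` parallel to `H`. A symmetry of a section whose
mirror is parallel to `H` reverses the chords of the section in its direction of steepest slope.
The vertical sections all share their mirror height `e 0`, since they share the vertical chord
through `p`; hence `K` is symmetric in the height `e 0`, which is nonzero by the assumption on `p`,
and is determined by its half-height `W`. A section tilted by a small `w` maps one end of the chord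
over any `y ⟂ w` to the other. Expanding this to first order in `w` relates the derivative of
`W ^ 2` at `y` along `w` to the height `e w` of the mirror, which does not depend on `y`; since
`e 0 ≠ 0`, it follows that `W ^ 2` minus a linear functional is a radial function. The second order
term shows that this radial function has constant derivative in `‖y‖ ^ 2`, so `W ^ 2` is a
quadratic polynomial over the interior of the shadow of `K`. Finally `W` vanishes on the boundary of
the shadow: a symmetry with small tilt would move a vertical boundary segment out of the shadow.
-/

open Filter Topology Asymptotics
open scoped RealInnerProductSpace

section OneVariable

theorem eq_closedBall_of_symmetric {S : Set ℝ} {c : ℝ} (hcompact : IsCompact S)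
    (hconvex : Convex ℝ S) (hne : S.Nonempty) (hsymm : ∀ z ∈ S, 2 * c - z ∈ S) :
    S = closedBall c (diam S / 2) := by
  obtain ⟨a, b, hS⟩ : ∃ a b, S = Icc a b :=
    ⟨_, _, eq_Icc_of_connected_compact ⟨hne, hconvex.isPreconnected⟩ hcompact⟩
  subst hS
  have hab : a ≤ b := nonempty_Icc.mp hne
  have hleft := hsymm a (left_mem_Icc.mpr hab)
  have hright := hsymm b (right_mem_Icc.mpr hab)
  rw [mem_Icc] at hleft hright
  rw [Real.diam_Icc hab, Real.closedBall_eq_Icc]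
  congr 1 <;> linarith

theorem center_eq_of_symmetric {S : Set ℝ} {c c' : ℝ} (hcompact : IsCompact S)
    (hconvex : Convex ℝ S) (hne : S.Nonempty) (hsymm : ∀ z ∈ S, 2 * c - z ∈ S)
    (hsymm' : ∀ z ∈ S, 2 * c' - z ∈ S) : c = c' := by
  have heq := (eq_closedBall_of_symmetric hcompact hconvex hne hsymm).symm.trans
    (eq_closedBall_of_symmetric hcompact hconvex hne hsymm')
  have hr : 0 ≤ diam S / 2 := div_nonneg diam_nonneg zero_le_two
  rw [Real.closedBall_eq_Icc, Real.closedBall_eq_Icc, Icc_eq_Icc_iff (by linarith)] at heq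
  linarith [heq.1]

/-- `φ` has a kink at `0`: the expansion `φ s = φ 0 + p * s + q * |s| + o(s)`, that is, the
one-sided derivatives `p + q` on the right and `p - q` on the left. -/
def HasKinkAtZero (φ : ℝ → ℝ) (p q : ℝ) : Prop :=
  (fun s ↦ φ s - φ 0 - (p * s + q * |s|)) =o[𝓝 0] fun s ↦ s

theorem hasKinkAtZero_of_hasDerivWithinAt {φ : ℝ → ℝ} {a b : ℝ}
    (hright : HasDerivWithinAt φ a (Ioi 0) 0) (hleft : HasDerivWithinAt φ b (Iio 0) 0) :
    HasKinkAtZero φ ((a + b) / 2) ((a - b) / 2) := by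
  rw [hasDerivWithinAt_Ioi_iff_Ici, hasDerivWithinAt_iff_isLittleO] at hright
  rw [hasDerivWithinAt_Iio_iff_Iic, hasDerivWithinAt_iff_isLittleO] at hleft
  simp only [sub_zero, smul_eq_mul] at hright hleft
  rw [HasKinkAtZero, ← nhdsLE_sup_nhdsGE, isLittleO_sup]
  constructor
  · refine hleft.congr' (eventually_mem_nhdsWithin.mono fun s hs ↦ ?_) .rfl
    simp only [abs_of_nonpos (mem_Iic.mp hs)]
    ring
  · refine hright.congr' (eventually_mem_nhdsWithin.mono fun s hs ↦ ?_) .rfl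
    simp only [abs_of_nonneg (mem_Ici.mp hs)]
    ring

theorem HasKinkAtZero.hasDerivWithinAt_Ioi {φ : ℝ → ℝ} {p q : ℝ} (hφ : HasKinkAtZero φ p q) :
    HasDerivWithinAt φ (p + q) (Ioi 0) 0 := by
  rw [hasDerivWithinAt_iff_isLittleO]
  refine (hφ.mono nhdsWithin_le_nhds).congr'
    (eventually_mem_nhdsWithin.mono fun s hs ↦ ?_) (.of_forall fun s ↦ (sub_zero s).symm)
  simp only [abs_of_pos (mem_Ioi.mp hs), sub_zero, smul_eq_mul]
  ring

theorem HasKinkAtZero.hasDerivWithinAt_Iio {φ : ℝ → ℝ} {p q : ℝ} (hφ : HasKinkAtZero φ p q) :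
    HasDerivWithinAt φ (p - q) (Iio 0) 0 := by
  rw [hasDerivWithinAt_iff_isLittleO]
  refine (hφ.mono nhdsWithin_le_nhds).congr'
    (eventually_mem_nhdsWithin.mono fun s hs ↦ ?_) (.of_forall fun s ↦ (sub_zero s).symm)
  simp only [abs_of_neg (mem_Iio.mp hs), sub_zero, smul_eq_mul]
  ring

theorem HasKinkAtZero.hasDerivAt_iff {φ : ℝ → ℝ} {p q d : ℝ} (hφ : HasKinkAtZero φ p q) :
    HasDerivAt φ d 0 ↔ d = p ∧ q = 0 := by
  constructor
  · intro hd
    have hright := (uniqueDiffWithinAt_Ioi (0 : ℝ)).eq_deriv _ hd.hasDerivWithinAt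
      hφ.hasDerivWithinAt_Ioi
    have hleft := (uniqueDiffWithinAt_Iio (0 : ℝ)).eq_deriv _ hd.hasDerivWithinAt
      hφ.hasDerivWithinAt_Iio
    constructor <;> linarith
  · rintro ⟨rfl, rfl⟩
    rw [hasDerivAt_iff_isLittleO_nhds_zero]
    refine IsLittleO.congr_left hφ fun s ↦ ?_
    rw [zero_add, smul_eq_mul]
    ring

theorem isLittleO_of_le_of_add_comp_neg_nonpos {φ lower : ℝ → ℝ}
    (hlower : lower =o[𝓝 0] fun t ↦ t) (hle : ∀ᶠ t in 𝓝 0, lower t ≤ φ t)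
    (hodd : ∀ᶠ t in 𝓝 0, φ t + φ (-t) ≤ 0) : φ =o[𝓝 0] fun t ↦ t := by
  have hneg : Tendsto (fun t : ℝ ↦ -t) (𝓝 0) (𝓝 0) := continuous_neg.tendsto' _ _ neg_zero
  have hlower_neg : (fun t ↦ lower (-t)) =o[𝓝 0] fun t ↦ t :=
    (hlower.comp_tendsto hneg).of_neg_right
  refine IsBigO.trans_isLittleO (.of_bound' ?_) (hlower.norm_left.add hlower_neg.norm_left)
  filter_upwards [hle, hneg.eventually hle, hodd] with t hle_t hle_neg hodd_t
  simp only [Real.norm_eq_abs]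
  rw [abs_of_nonneg (a := |lower t| + |lower (-t)|) (by positivity), abs_le]
  constructor
  · linarith [neg_abs_le (lower t), abs_nonneg (lower (-t))]
  · linarith [neg_abs_le (lower (-t)), abs_nonneg (lower t)]

theorem eq_of_hasDerivWithinAt_Ioi_zero {F : ℝ → ℝ} {a b : ℝ} (hab : a < b)
    (hcont : ContinuousOn F (Icc a b)) (hderiv : ∀ x ∈ Ioo a b, HasDerivWithinAt F 0 (Ioi x) x) :
    F b = F a := by
  have hconst : EqOn (fun _ ↦ F b) F (Ioc a b) := fun c hc ↦ by
    refine constant_of_has_deriv_right_zero (hcont.mono (Icc_subset_Icc_left hc.1.le))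
      (fun x hx ↦ ?_) b (right_mem_Icc.mpr hc.2)
    exact hasDerivWithinAt_Ioi_iff_Ici.mp (hderiv x ⟨hc.1.trans_le hx.1, hx.2⟩)
  exact hconst.of_subset_closure continuousOn_const hcont Ioc_subset_Icc_self
    (closure_Ioc hab.ne).ge (left_mem_Icc.mpr hab.le)

end OneVariable

section LineDerivatives

variable {E : Type*} [NormedAddCommGroup E] [NormedSpace ℝ E] {U : Set E} {W : E → ℝ} {x : E}

theorem exists_hasDerivWithinAt_Ioi_of_concaveOn (hU : IsOpen U) (hW : ConcaveOn ℝ U W)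
    (hx : x ∈ U) (v : E) : ∃ d, HasDerivWithinAt (fun t : ℝ ↦ W (x + t • v)) d (Ioi 0) 0 := by
  set γ : ℝ →ᵃ[ℝ] E := AffineMap.lineMap x (x + v) with hγ
  have hγ_apply (t : ℝ) : γ t = x + t • v := by simp [hγ, AffineMap.lineMap_apply, add_comm]
  have hconvex : ConvexOn ℝ (γ ⁻¹' U) (-(W ∘ γ)) := (hW.comp_affineMap γ).neg
  have hzero : (0 : ℝ) ∈ interior (γ ⁻¹' U) := by
    have hopen : IsOpen (γ ⁻¹' U) :=
      hU.preimage (by simpa only [funext hγ_apply] using by fun_prop)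
    rw [hopen.interior_eq, mem_preimage, hγ_apply]
    simpa using hx
  have := (hconvex.hasDerivWithinAt_rightDeriv_of_mem_interior hzero).neg
  simp only [neg_neg] at this
  exact ⟨_, this.congr (fun t _ ↦ by simp [hγ_apply]) (by simp [hγ_apply])⟩

theorem exists_hasKinkAtZero_sq_of_concaveOn (hU : IsOpen U) (hW : ConcaveOn ℝ U W)
    (hx : x ∈ U) (v : E) : ∃ p q, HasKinkAtZero (fun t : ℝ ↦ W (x + t • v) ^ 2) p q := by
  obtain ⟨a, ha⟩ := exists_hasDerivWithinAt_Ioi_of_concaveOn hU hW hx v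
  obtain ⟨b, hb⟩ := exists_hasDerivWithinAt_Ioi_of_concaveOn hU hW hx (-v)
  have hneg : HasDerivWithinAt (fun t : ℝ ↦ W (x + t • v)) (b * -1) (Iio 0) 0 := by
    have hb' : HasDerivWithinAt (fun t : ℝ ↦ W (x + t • -v)) b (Ioi 0) (-0) := by
      simpa only [neg_zero] using hb
    have hmaps : MapsTo (fun t : ℝ ↦ -t) (Iio 0) (Ioi 0) :=
      fun _ ht ↦ mem_Ioi.mpr (neg_pos.mpr (mem_Iio.mp ht))
    refine (hb'.comp (0 : ℝ) (hasDerivAt_neg (0 : ℝ)).hasDerivWithinAt hmaps).congr_deriv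
      rfl |>.congr (fun t _ ↦ by simp) (by simp)
  exact ⟨_, _, hasKinkAtZero_of_hasDerivWithinAt (ha.fun_pow 2) (hneg.fun_pow 2)⟩

theorem hasLineDerivAt_add_of_concaveOn (hU : IsOpen U) (hW : ConcaveOn ℝ U W) (hx : x ∈ U)
    {a b : E} {α β : ℝ} (ha : HasLineDerivAt ℝ W α x a) (hb : HasLineDerivAt ℝ W β x b) :
    HasLineDerivAt ℝ W (α + β) x (a + b) := by
  have hmem (c : E) : ∀ᶠ t : ℝ in 𝓝 0, x + t • c ∈ U :=
    (show Continuous fun t : ℝ ↦ x + t • c by fun_prop).tendsto' 0 x (by simp) |>.eventually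
      (hU.mem_nhds hx)
  have hmid {c d : E} (hc : x + c ∈ U) (hd : x + d ∈ U) :
      W (x + c) + W (x + d) ≤ 2 * W (x + (1 / 2 : ℝ) • (c + d)) := by
    have := hW.2 hc hd one_half_pos.le one_half_pos.le (add_halves 1)
    rw [show (1 / 2 : ℝ) • (x + c) + (1 / 2 : ℝ) • (x + d) = x + (1 / 2 : ℝ) • (c + d)
      by module, smul_eq_mul, smul_eq_mul] at this
    linarith
  have hhalf {c : E} {δ : ℝ} (hc : HasLineDerivAt ℝ W δ x c) :
      (fun t : ℝ ↦ 2⁻¹ * (W (x + (2 * t) • c) - W x - (2 * t) • δ)) =o[𝓝 0] fun t ↦ t :=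
    ((hasLineDerivAt_iff_isLittleO_nhds_zero.mp hc).comp_tendsto
      ((continuous_const_mul (2 : ℝ)).tendsto' _ _ (mul_zero _))).const_mul_left 2⁻¹
      |>.trans_isBigO (isBigO_const_mul_self 2 _ _)
  rw [hasLineDerivAt_iff_isLittleO_nhds_zero]
  refine isLittleO_of_le_of_add_comp_neg_nonpos ((hhalf ha).add (hhalf hb)) ?_ ?_
  · have hscale (c : E) : ∀ᶠ t : ℝ in 𝓝 0, x + (2 * t) • c ∈ U := by
      simpa only [mul_comm, mul_smul] using hmem ((2 : ℝ) • c)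
    filter_upwards [hscale a, hscale b] with t hta htb
    have := hmid hta htb
    rw [show (1 / 2 : ℝ) • ((2 * t) • a + (2 * t) • b) = t • (a + b) by module] at this
    simp only [smul_eq_mul]
    linarith
  · filter_upwards [hmem (a + b), hmem (-(a + b))] with t ht htneg
    have := hmid ht htneg
    rw [show (1 / 2 : ℝ) • (t • (a + b) + t • -(a + b)) = 0 by module, add_zero, smul_neg,
      ← neg_smul] at this
    simp only [smul_eq_mul]
    linarith

/-- The directions in which a concave function has a two-sided directional derivative at `x`. -/
def lineDifferentiableDirections (hU : IsOpen U) (hW : ConcaveOn ℝ U W) (hx : x ∈ U) :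
    Submodule ℝ E where
  carrier := {v | LineDifferentiableAt ℝ W x v}
  zero_mem' := hasLineDerivAt_zero.lineDifferentiableAt
  add_mem' ha hb :=
    (hasLineDerivAt_add_of_concaveOn hU hW hx ha.hasLineDerivAt hb.hasLineDerivAt)
      |>.lineDifferentiableAt
  smul_mem' c _ hv := (hv.hasLineDerivAt.smul c).lineDifferentiableAt

theorem exists_linearMap_forall_hasLineDerivAt (hU : IsOpen U) (hW : ConcaveOn ℝ U W) (hx : x ∈ U)
    (htop : lineDifferentiableDirections hU hW hx = ⊤) :
    ∃ g : E →ₗ[ℝ] ℝ, ∀ v, HasLineDerivAt ℝ W (g v) x v := by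
  have hderiv (v : E) : HasLineDerivAt ℝ W (lineDeriv ℝ W x v) x v :=
    LineDifferentiableAt.hasLineDerivAt (htop.ge (Submodule.mem_top (x := v)))
  exact ⟨{ toFun := lineDeriv ℝ W x
           map_add' a b :=
            (hasLineDerivAt_add_of_concaveOn hU hW hx (hderiv a) (hderiv b)).lineDeriv
           map_smul' c v := ((hderiv v).smul c).lineDeriv }, hderiv⟩

theorem hasDerivAt_comp_of_hasLineDerivAt {γ : ℝ → E} {t D : ℝ} {v : E} {s : Set E} {C : NNReal}
    (hlip : LipschitzOnWith C W s) (hs : s ∈ 𝓝 (γ t)) (hW : HasLineDerivAt ℝ W D (γ t) v)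
    (hγ : HasDerivAt γ v t) : HasDerivAt (fun τ ↦ W (γ τ)) D t := by
  rw [hasDerivAt_iff_isLittleO]
  have hline : Tendsto (fun τ : ℝ ↦ τ - t) (𝓝 t) (𝓝 0) :=
    (continuous_sub_right t).tendsto' _ _ (sub_self t)
  have htangent := (hasLineDerivAt_iff_isLittleO_nhds_zero.mp hW).comp_tendsto hline
  have hdiff : (fun τ ↦ W (γ τ) - W (γ t + (τ - t) • v)) =o[𝓝 t] fun τ ↦ τ - t := by
    refine IsBigO.trans_isLittleO (IsBigO.of_bound C ?_) (hasDerivAt_iff_isLittleO.mp hγ)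
    have hnear : Tendsto (fun τ : ℝ ↦ γ t + (τ - t) • v) (𝓝 t) (𝓝 (γ t)) :=
      (show Continuous fun τ : ℝ ↦ γ t + (τ - t) • v by fun_prop).tendsto' _ _ (by simp)
    filter_upwards [hγ.continuousAt.eventually hs, hnear.eventually hs] with τ h₁ h₂
    simpa only [sub_add_eq_sub_sub] using hlip.norm_sub_le h₁ h₂
  refine (hdiff.add htangent).congr_left fun τ ↦ ?_
  simp only [Function.comp_apply, smul_eq_mul]
  ring

end LineDerivatives

theorem exists_differentiableAt_of_concaveOn {E : Type*} [NormedAddCommGroup E]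
    [NormedSpace ℝ E] [FiniteDimensional ℝ E] {U V : Set E} {W : E → ℝ} (hU : IsOpen U)
    (hW : ConcaveOn ℝ U W) (hV : IsOpen V) (hVU : V ⊆ U) (hne : V.Nonempty) :
    ∃ y ∈ V, DifferentiableAt ℝ W y := by
  borelize E
  obtain ⟨x, hx⟩ := hne
  obtain ⟨C, s, hs, hlip⟩ := hW.locallyLipschitzOn hU (hVU hx)
  rw [hU.nhdsWithin_eq (hVU hx)] at hs
  have hdense := Measure.dense_of_ae (hlip.ae_differentiableWithinAt_of_mem
    (μ := (Measure.addHaar : Measure E)))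
  obtain ⟨y, hy, hdiff⟩ := hdense.inter_open_nonempty (interior s ∩ V) (isOpen_interior.inter hV)
    ⟨x, mem_interior_iff_mem_nhds.mpr hs, hx⟩
  exact ⟨y, hy.2, (hdiff (interior_subset hy.1)).differentiableAt
    (mem_interior_iff_mem_nhds.mp hy.1)⟩

theorem exists_norm_eq_one_inner_eq_zero {E : Type*} [NormedAddCommGroup E]
    [InnerProductSpace ℝ E] (hdim : 1 < Module.finrank ℝ E) (y : E) :
    ∃ u : E, ‖u‖ = 1 ∧ ⟪u, y⟫ = 0 := by
  have : FiniteDimensional ℝ E := .of_finrank_pos (by omega)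
  have hspan : (ℝ ∙ y)ᗮ ≠ ⊥ := fun h ↦ by
    have := finrank_span_le_card (R := ℝ) ({y} : Set E)
    rw [Submodule.orthogonal_eq_bot_iff.mp h, finrank_top, toFinset_singleton,
      Finset.card_singleton] at this
    omega
  obtain ⟨v, hv, hv0⟩ := Submodule.exists_mem_ne_zero_of_ne_bot hspan
  refine ⟨‖v‖⁻¹ • v, norm_smul_inv_norm hv0, ?_⟩
  rw [real_inner_smul_left, Submodule.mem_orthogonal_singleton_iff_inner_left.mp hv, mul_zero]

theorem exists_norm_eq_one_inner_eq_zero_nonneg {E : Type*} [NormedAddCommGroup E]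
    [InnerProductSpace ℝ E] (hdim : 1 < Module.finrank ℝ E) (y : E) (l : E →ₗ[ℝ] ℝ) :
    ∃ u : E, ‖u‖ = 1 ∧ ⟪u, y⟫ = 0 ∧ 0 ≤ l u := by
  obtain ⟨u, hu, huy⟩ := exists_norm_eq_one_inner_eq_zero hdim y
  rcases le_total 0 (l u) with h | h
  · exact ⟨u, hu, huy, h⟩
  · exact ⟨-u, by rwa [norm_neg], by rw [inner_neg_left, huy, neg_zero], by simpa using h⟩

theorem inner_eq_zero_of_hasDerivAt_of_norm_eq {E : Type*} [NormedAddCommGroup E]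
    [InnerProductSpace ℝ E] {γ : ℝ → E} {v : E} {t r : ℝ} (hγ : HasDerivAt γ v t)
    (hnorm : ∀ᶠ τ in 𝓝 t, ‖γ τ‖ = r) : ⟪v, γ t⟫ = 0 := by
  have hconst : HasDerivAt (fun τ ↦ ‖γ τ‖ ^ 2) 0 t :=
    (hasDerivAt_const t (r ^ 2)).congr_of_eventuallyEq (hnorm.mono fun τ hτ ↦ by simp only [hτ])
  have := hγ.norm_sq.unique hconst
  rw [real_inner_comm]
  linarith

theorem exists_tendsto_zero_inner_eq_mul_norm_sq {E : Type*} [NormedAddCommGroup E]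
    [InnerProductSpace ℝ E] (hdim : 1 < Module.finrank ℝ E) {y : E} {z : ℝ} (hz : z ≠ 0)
    {l : E →ₗ[ℝ] ℝ} (hl : 0 < l y) :
    ∃ w : ℝ → E, Tendsto w (𝓝[>] 0) (𝓝 0) ∧
      ∀ τ, 0 < τ → ⟪w τ, y⟫ = z * ‖w τ‖ ^ 2 ∧ 0 < z * l (w τ) := by
  obtain ⟨v, hv, hvy, hlv⟩ := exists_norm_eq_one_inner_eq_zero_nonneg hdim y l
  have hy : 0 < ‖y‖ := norm_pos_iff.mpr fun h ↦ hl.ne' (by rw [h, map_zero])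
  set x : ℝ → E := fun τ ↦ v + τ • y
  set s : ℝ → ℝ := fun τ ↦ τ * ‖y‖ ^ 2 / (z * ‖x τ‖ ^ 2)
  have hxpos (τ : ℝ) : 0 < ‖x τ‖ ^ 2 := by
    have horth : ⟪v, τ • y⟫ = 0 := by rw [real_inner_smul_right, hvy, mul_zero]
    rw [sq, norm_add_sq_eq_norm_sq_add_norm_sq_real horth, hv]
    positivity
  have hcont : Continuous fun τ ↦ s τ • x τ := by
    have hx : Continuous x := by fun_prop
    have hden (τ : ℝ) : z * ‖x τ‖ ^ 2 ≠ 0 := mul_ne_zero hz (hxpos τ).ne'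
    fun_prop (disch := assumption)
  refine ⟨fun τ ↦ s τ • x τ,
    (hcont.tendsto' 0 0 (by simp [s])).mono_left nhdsWithin_le_nhds, fun τ hτ ↦ ⟨?_, ?_⟩⟩
  · have hxy : ⟪x τ, y⟫ = τ * ‖y‖ ^ 2 := by
      rw [inner_add_left, hvy, zero_add, real_inner_smul_left, real_inner_self_eq_norm_sq]
    have := (hxpos τ).ne'
    rw [real_inner_smul_left, hxy, norm_smul, mul_pow, Real.norm_eq_abs, sq_abs]
    simp only [s]
    field_simp
  · have hlx : 0 < l (x τ) := by
      simp only [x, map_add, map_smul, smul_eq_mul]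
      positivity
    have hzs : z * s τ = τ * ‖y‖ ^ 2 / ‖x τ‖ ^ 2 := by
      simp only [s]
      field_simp
    rw [map_smul, smul_eq_mul, ← mul_assoc, hzs]
    have := hxpos τ
    positivity

section TiltSymmetric

variable {E : Type*}

/-- Half the length of the vertical chord of `K` over `y`. -/
def halfHeight (K : Set (E × ℝ)) (y : E) : ℝ := diam {z | (y, z) ∈ K} / 2

theorem halfHeight_nonneg (K : Set (E × ℝ)) (y : E) : 0 ≤ halfHeight K y :=
  div_nonneg diam_nonneg zero_le_two

/-- The vertical projection of the interior of `K`, i.e. the interior of the shadow of `K`. -/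
def openShadow [TopologicalSpace E] (K : Set (E × ℝ)) : Set E := Prod.fst '' interior K

theorem isOpen_openShadow [TopologicalSpace E] (K : Set (E × ℝ)) : IsOpen (openShadow K) :=
  isOpenMap_fst _ isOpen_interior

theorem openShadow_subset [TopologicalSpace E] (K : Set (E × ℝ)) :
    openShadow K ⊆ Prod.fst '' K :=
  image_mono interior_subset

/-- The heights at which the line through `(y, 0)` of direction `(w, 1)` meets `K`. -/
def chord [AddCommGroup E] [Module ℝ E] (K : Set (E × ℝ)) (y w : E) : Set ℝ :=
  {z | (y + z • w, z) ∈ K}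

variable [NormedAddCommGroup E] [InnerProductSpace ℝ E]

theorem isCompact_chord {K : Set (E × ℝ)} (hK : IsCompact K) (y w : E) :
    IsCompact (chord K y w) := by
  have hclosed : IsClosed (chord K y w) :=
    hK.isClosed.preimage (f := fun z : ℝ ↦ (y + z • w, z)) (by fun_prop)
  exact (hK.image continuous_snd).of_isClosed_subset hclosed
    fun z hz ↦ ⟨_, hz, rfl⟩

theorem convex_chord {K : Set (E × ℝ)} (hK : Convex ℝ K) (y w : E) :
    Convex ℝ (chord K y w) := by
  intro z₁ hz₁ z₂ hz₂ a b ha hb hab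
  have := hK hz₁ hz₂ ha hb hab
  rwa [Prod.smul_mk, Prod.smul_mk, Prod.mk_add_mk,
    show a • (y + z₁ • w) + b • (y + z₂ • w) = (a + b) • y + (a • z₁ + b • z₂) • w by module,
    hab, one_smul] at this

/-- A convex body in `E × ℝ` whose sections by hyperplanes through the interior point `0` all have
a horizontal symmetry. A tilt `w ≠ 0` encodes the hyperplane `⟪w, y⟫ = z * ‖w‖ ^ 2`, whose section
is symmetric with respect to its points at height `e w`; the tilt `0` encodes the vertical
hyperplanes, which all share the symmetry height `e 0`. -/
structure IsTiltSymmetric (K : Set (E × ℝ)) (e : E → ℝ) : Prop where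
  isCompact : IsCompact K
  convex : Convex ℝ K
  zero_mem_interior : (0 : E × ℝ) ∈ interior K
  reflect_mem : ∀ (w y : E) (z : ℝ), ⟪w, y⟫ = z * ‖w‖ ^ 2 → (y, z) ∈ K →
    (y + (2 * (e w - z)) • w, 2 * e w - z) ∈ K
  height_zero_ne_zero : e 0 ≠ 0

/-- The linear functional `g` gives the derivative of the squared half-height of `K` at every
point of the shadow in every direction orthogonal to the position vector. -/
def IsTangentialDerivative (K : Set (E × ℝ)) (g : E →ₗ[ℝ] ℝ) : Prop :=
  ∀ y ∈ openShadow K, ∀ v, ⟪v, y⟫ = 0 →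
    HasLineDerivAt ℝ (fun x ↦ halfHeight K x ^ 2) (g v) y v

/-- The squared half-height of `K` with its linear part `g` removed; when `g` is the tangential
derivative, this is a function of the norm. -/
def radialPart (K : Set (E × ℝ)) (g : E →ₗ[ℝ] ℝ) (y : E) : ℝ := halfHeight K y ^ 2 - g y

namespace IsTiltSymmetric

variable {K : Set (E × ℝ)} {e : E → ℝ} {y v : E}

theorem zero_mem_openShadow (hK : IsTiltSymmetric K e) : (0 : E) ∈ openShadow K :=
  ⟨0, hK.zero_mem_interior, rfl⟩

theorem convex_openShadow (hK : IsTiltSymmetric K e) : Convex ℝ (openShadow K) :=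
  hK.convex.interior.linear_image (LinearMap.fst ℝ E ℝ)

theorem smul_mem_openShadow (hK : IsTiltSymmetric K e) (hy : y ∈ Prod.fst '' K) {t : ℝ}
    (ht : t ∈ Ico (0 : ℝ) 1) : t • y ∈ openShadow K := by
  obtain ⟨⟨y, z⟩, hyz, rfl⟩ := hy
  refine ⟨t • (y, z), ?_, rfl⟩
  simpa using hK.convex.combo_interior_self_mem_interior hK.zero_mem_interior hyz
    (sub_pos.mpr ht.2) ht.1 (sub_add_cancel 1 t)

theorem chord_eq_closedBall (hK : IsTiltSymmetric K e) {w : E} (hw : ⟪w, y⟫ = 0)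
    (hne : (chord K y w).Nonempty) :
    chord K y w = closedBall (e w) (diam (chord K y w) / 2) := by
  refine eq_closedBall_of_symmetric (isCompact_chord hK.isCompact y w)
    (convex_chord hK.convex y w) hne fun z hz ↦ ?_
  have hplane : ⟪w, y + z • w⟫ = z * ‖w‖ ^ 2 := by
    rw [inner_add_right, hw, zero_add, real_inner_smul_right, real_inner_self_eq_norm_sq]
  have := hK.reflect_mem w _ z hplane hz
  rwa [show y + z • w + (2 * (e w - z)) • w = y + (2 * e w - z) • w by module] at this

theorem mem_iff_abs_sub_le (hK : IsTiltSymmetric K e) (hy : y ∈ Prod.fst '' K) {z : ℝ} :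
    (y, z) ∈ K ↔ |z - e 0| ≤ halfHeight K y := by
  have hchord : chord K y 0 = {z | (y, z) ∈ K} := by simp [chord]
  have hne : (chord K y 0).Nonempty := by
    obtain ⟨⟨y, z⟩, hyz, rfl⟩ := hy
    exact hchord ▸ ⟨z, hyz⟩
  have hball := hK.chord_eq_closedBall (inner_zero_left y) hne
  rw [hchord] at hball
  exact Set.ext_iff.mp hball z

theorem halfHeight_pos (hK : IsTiltSymmetric K e) (hy : y ∈ openShadow K) :
    0 < halfHeight K y := by
  have hyK := openShadow_subset K hy
  obtain ⟨⟨y, z⟩, hyz, rfl⟩ := hy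
  refine (halfHeight_nonneg K y).lt_of_ne' fun hzero ↦ ?_
  have hcont : Continuous fun s : ℝ ↦ (y, s) := by fun_prop
  have hnhds : {s | (y, s) ∈ K} ∈ 𝓝 z :=
    hcont.continuousAt (mem_interior_iff_mem_nhds.mp hyz)
  have hsubset : {s | (y, s) ∈ K} ⊆ {e 0} := fun s hs ↦ by
    have := (hK.mem_iff_abs_sub_le hyK).mp hs
    rw [hzero] at this
    exact sub_eq_zero.mp (abs_nonpos_iff.mp this)
  have hfinite := (finite_singleton (e 0)).subset hsubset
  exact (infinite_of_mem_nhds z hnhds) hfinite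

theorem concaveOn_halfHeight (hK : IsTiltSymmetric K e) :
    ConcaveOn ℝ (openShadow K) (halfHeight K) := by
  refine ⟨hK.convex_openShadow, fun y₁ hy₁ y₂ hy₂ a b ha hb hab ↦ ?_⟩
  have htop {y : E} (hy : y ∈ openShadow K) : (y, e 0 + halfHeight K y) ∈ K := by
    rw [hK.mem_iff_abs_sub_le (openShadow_subset K hy), add_sub_cancel_left,
      abs_of_nonneg (halfHeight_nonneg K y)]
  have hcombo := hK.convex (htop hy₁) (htop hy₂) ha hb hab
  have hle := (hK.mem_iff_abs_sub_le ⟨_, hcombo, rfl⟩).mp hcombo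
  have hheight : a * (e 0 + halfHeight K y₁) + b * (e 0 + halfHeight K y₂) - e 0
      = a * halfHeight K y₁ + b * halfHeight K y₂ := by linear_combination (e 0) * hab
  simp only [Prod.smul_mk, Prod.mk_add_mk, smul_eq_mul] at hle ⊢
  rw [hheight] at hle
  exact (le_abs_self _).trans hle

theorem tendsto_add_smul (hK : IsTiltSymmetric K e) {ι : Type*} {l : Filter ι} {w : ι → E}
    {z : ι → ℝ} (hw : Tendsto w l (𝓝 0)) (hz : ∀ᶠ i in l, z i ∈ chord K y (w i)) :
    Tendsto (fun i ↦ y + z i • w i) l (𝓝 y) := by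
  obtain ⟨C, hC⟩ := hK.isCompact.isBounded.exists_norm_le
  have hsmul : Tendsto (fun i ↦ z i • w i) l (𝓝 0) := by
    refine squeeze_zero_norm' (hz.mono fun i hi ↦ ?_) (by simpa using hw.norm.const_mul C)
    rw [norm_smul]
    gcongr
    exact (norm_snd_le _).trans (hC _ hi)
  simpa using hsmul.const_add y

theorem eventually_height_zero_mem_chord (hK : IsTiltSymmetric K e) (hy : y ∈ openShadow K) :
    ∀ᶠ w in 𝓝 (0 : E), e 0 ∈ chord K y w := by
  have hline : Tendsto (fun w : E ↦ y + e 0 • w) (𝓝 0) (𝓝 y) :=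
    (by fun_prop : Continuous fun w : E ↦ y + e 0 • w).tendsto' _ _ (by simp)
  filter_upwards [hline.eventually ((isOpen_openShadow K).mem_nhds hy)] with w hw
  refine (hK.mem_iff_abs_sub_le (openShadow_subset K hw)).mpr ?_
  simpa using halfHeight_nonneg K (y + e 0 • w)

theorem hasLineDerivAt_sq_halfHeight_iff_halfHeight (hK : IsTiltSymmetric K e)
    (hy : y ∈ openShadow K) {a : ℝ} :
    HasLineDerivAt ℝ (fun x ↦ halfHeight K x ^ 2) a y v ↔
      HasLineDerivAt ℝ (halfHeight K) (a / (2 * halfHeight K y)) y v := by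
  have hpos := hK.halfHeight_pos hy
  constructor <;> intro h
  · have hne : halfHeight K (y + (0 : ℝ) • v) ^ 2 ≠ 0 := by simpa using hpos.ne'
    simpa only [HasLineDerivAt, Real.sqrt_sq (halfHeight_nonneg K _), zero_smul, add_zero] using
      HasDerivAt.sqrt h hne
  · refine (HasDerivAt.fun_pow h 2).congr_deriv ?_
    simp only [zero_smul, add_zero]
    field_simp
    ring

theorem exists_hasDerivWithinAt_radialPart_sqrt (hK : IsTiltSymmetric K e) (g : E →ₗ[ℝ] ℝ)
    {u : E} {r : ℝ} (hr : 0 < r) (hru : r • u ∈ openShadow K) :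
    ∃ d, HasDerivWithinAt (fun a ↦ radialPart K g (√a • u)) d (Ioi (r ^ 2)) (r ^ 2) := by
  obtain ⟨d, hd⟩ := exists_hasDerivWithinAt_Ioi_of_concaveOn (isOpen_openShadow K)
    hK.concaveOn_halfHeight hru u
  have hline : HasDerivAt (fun t : ℝ ↦ g (r • u + t • u)) (g u) 0 := by
    simpa only [map_add, map_smul, smul_eq_mul, one_mul, id] using
      ((hasDerivAt_id (0 : ℝ)).mul_const (g u)).const_add (r * g u)
  have hsqrt_sq : √(r ^ 2) - r = 0 := by rw [Real.sqrt_sq hr.le, sub_self]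
  have hradial := (hd.fun_pow 2).sub hline.hasDerivWithinAt
  rw [← hsqrt_sq] at hradial
  have hsqrt := ((Real.hasDerivAt_sqrt (pow_pos hr 2).ne').sub_const r).hasDerivWithinAt
    (s := Ioi (r ^ 2))
  have hmaps : MapsTo (fun a ↦ √a - r) (Ioi (r ^ 2)) (Ioi (√(r ^ 2) - r)) := fun a ha ↦ by
    rw [hsqrt_sq]
    exact mem_Ioi.mpr (sub_pos.mpr (Real.lt_sqrt_of_sq_lt ha))
  have hpoint (a : ℝ) : r • u + (√a - r) • u = √a • u := by module
  refine ⟨_, (hradial.comp (r ^ 2) hsqrt hmaps).congr (fun a _ ↦ ?_) ?_⟩ <;>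
    simp only [radialPart, Function.comp_apply, Pi.sub_apply, hpoint]

theorem eq_of_isLittleO_two_mul_height (hK : IsTiltSymmetric K e) {p d d' : ℝ}
    (hd : (fun t ↦ 2 * e (t • v) - 2 * e 0 - (p * t + 2 * e 0 * d * t ^ 2)) =o[𝓝 0]
      fun t ↦ t ^ 2)
    (hd' : (fun t ↦ 2 * e (t • v) - 2 * e 0 - (p * t + 2 * e 0 * d' * t ^ 2)) =o[𝓝 0]
      fun t ↦ t ^ 2) : d = d' := by
  have hdiff : (fun t : ℝ ↦ (2 * e 0 * (d' - d)) * t ^ 2) =o[𝓝 0] fun t ↦ t ^ 2 :=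
    (hd.sub hd').congr_left fun t ↦ by ring
  by_contra hne
  rw [isLittleO_const_mul_left_iff
    (mul_ne_zero (mul_ne_zero two_ne_zero hK.height_zero_ne_zero) (sub_ne_zero.mpr (Ne.symm hne)))]
    at hdiff
  have hne_zero : ∀ᶠ t : ℝ in 𝓝[≠] 0, t ^ 2 ≠ 0 :=
    eventually_mem_nhdsWithin.mono fun t ht ↦ pow_ne_zero 2 ht
  exact isLittleO_irrefl (hne_zero.frequently.filter_mono nhdsWithin_le_nhds) hdiff

theorem exists_isMaxOn_of_notMem_openShadow (hK : IsTiltSymmetric K e)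
    (hy : y ∉ openShadow K) :
    ∃ l : E →L[ℝ] ℝ, 0 < l y ∧ ∀ x ∈ Prod.fst '' K, l x ≤ l y := by
  obtain ⟨l, hl⟩ := geometric_hahn_banach_open_point hK.convex_openShadow (isOpen_openShadow K) hy
  have hpos : 0 < l y := by simpa using hl 0 hK.zero_mem_openShadow
  refine ⟨l, hpos, fun x hx ↦ le_of_not_gt fun hlt ↦ ?_⟩
  have hx0 := hpos.trans hlt
  have hscaled := hl _ (hK.smul_mem_openShadow hx ⟨(div_pos hpos hx0).le, (div_lt_one hx0).mpr hlt⟩)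
  rw [map_smul, smul_eq_mul, div_mul_cancel₀ _ hx0.ne'] at hscaled
  exact lt_irrefl _ hscaled

theorem exists_smul_mem_image_notMem_openShadow (hK : IsTiltSymmetric K e)
    (hy : y ∉ openShadow K) :
    ∃ τ ∈ Ioc (0 : ℝ) 1, τ • y ∈ Prod.fst '' K ∧ τ • y ∉ openShadow K := by
  by_contra! hsubset
  have hclosure : closure (openShadow K) ⊆ Prod.fst '' K :=
    closure_minimal (openShadow_subset K) (hK.isCompact.image continuous_fst).isClosed
  have hsegment : segment ℝ 0 y ⊆ openShadow K := by
    refine (convex_segment 0 y).isPreconnected.subset_of_closure_inter_subset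
      (isOpen_openShadow K) ⟨0, left_mem_segment ℝ 0 y, hK.zero_mem_openShadow⟩ ?_
    rintro x ⟨hx, hxy⟩
    rw [segment_eq_image] at hxy
    obtain ⟨τ, hτ, rfl⟩ := hxy
    simp only [smul_zero, zero_add] at hx ⊢
    rcases hτ.1.eq_or_lt with rfl | hpos
    · simpa using hK.zero_mem_openShadow
    · exact hsubset τ ⟨hpos, hτ.2⟩ (hclosure hx)
  exact hy (hsegment (right_mem_segment ℝ 0 y))

variable [FiniteDimensional ℝ E]

theorem continuousAt_halfHeight (hK : IsTiltSymmetric K e) (hy : y ∈ openShadow K) :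
    ContinuousAt (halfHeight K) y :=
  (hK.concaveOn_halfHeight.continuousOn (isOpen_openShadow K)).continuousAt
    ((isOpen_openShadow K).mem_nhds hy)

theorem abs_sub_eq_halfHeight (hK : IsTiltSymmetric K e) {w : E} {z : ℝ}
    (hmem : y + z • w ∈ openShadow K) (hz : z ∈ chord K y w) (hnhds : chord K y w ∉ 𝓝 z) :
    |z - e 0| = halfHeight K (y + z • w) := by
  refine ((hK.mem_iff_abs_sub_le (openShadow_subset K hmem)).mp hz).eq_of_not_lt fun hlt ↦ hnhds ?_
  have hline : ContinuousAt (fun s : ℝ ↦ y + s • w) z := by fun_prop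
  have hheight : ContinuousAt (fun s : ℝ ↦ halfHeight K (y + s • w)) z :=
    (hK.continuousAt_halfHeight hmem).comp (f := fun s : ℝ ↦ y + s • w) hline
  have habs : ContinuousAt (fun s : ℝ ↦ |s - e 0|) z := by fun_prop
  filter_upwards [habs.eventually_lt hheight hlt,
    hline.eventually ((isOpen_openShadow K).mem_nhds hmem)] with s hs hsmem
  exact (hK.mem_iff_abs_sub_le (openShadow_subset K hsmem)).mpr hs.le

theorem abs_sub_tendsto (hK : IsTiltSymmetric K e) (hy : y ∈ openShadow K) {ι : Type*}
    {l : Filter ι} {w : ι → E} {z : ι → ℝ} (hw : Tendsto w l (𝓝 0))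
    (hz : ∀ᶠ i in l, z i ∈ chord K y (w i)) (hnhds : ∀ᶠ i in l, chord K y (w i) ∉ 𝓝 (z i)) :
    (∀ᶠ i in l, |z i - e 0| = halfHeight K (y + z i • w i)) ∧
      Tendsto (fun i ↦ |z i - e 0|) l (𝓝 (halfHeight K y)) := by
  have hpoint := hK.tendsto_add_smul hw hz
  have heq : ∀ᶠ i in l, |z i - e 0| = halfHeight K (y + z i • w i) := by
    filter_upwards [hz, hnhds, hpoint.eventually ((isOpen_openShadow K).mem_nhds hy)]
      with i hi hni hmem
    exact hK.abs_sub_eq_halfHeight hmem hi hni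
  exact ⟨heq, ((hK.continuousAt_halfHeight hy).tendsto.comp hpoint).congr'
    (heq.mono fun i hi ↦ hi.symm)⟩

theorem exists_chord_endpoints (hK : IsTiltSymmetric K e) (hy : y ∈ openShadow K) :
    ∃ z₁ z₂ : E → ℝ,
      Tendsto z₁ (𝓝[{w | ⟪w, y⟫ = 0}] 0) (𝓝 (e 0 - halfHeight K y)) ∧
      Tendsto z₂ (𝓝[{w | ⟪w, y⟫ = 0}] 0) (𝓝 (e 0 + halfHeight K y)) ∧
      ∀ᶠ w in 𝓝[{w | ⟪w, y⟫ = 0}] 0, z₁ w + z₂ w = 2 * e w ∧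
        (z₁ w - e 0) ^ 2 = halfHeight K (y + z₁ w • w) ^ 2 ∧
        (z₂ w - e 0) ^ 2 = halfHeight K (y + z₂ w • w) ^ 2 := by
  set l := 𝓝[{w : E | ⟪w, y⟫ = 0}] 0
  have hl : Tendsto id l (𝓝 0) := tendsto_id'.mpr nhdsWithin_le_nhds
  set z₁ : E → ℝ := fun w ↦ e w - diam (chord K y w) / 2
  set z₂ : E → ℝ := fun w ↦ e w + diam (chord K y w) / 2
  have hchord : ∀ᶠ w in l, e 0 ∈ chord K y w ∧ z₁ w ≤ z₂ w ∧ chord K y w = Icc (z₁ w) (z₂ w) := by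
    filter_upwards [hl.eventually (hK.eventually_height_zero_mem_chord hy),
      eventually_mem_nhdsWithin] with w hcenter hw
    have hdiam : 0 ≤ diam (chord K y w) := diam_nonneg
    exact ⟨hcenter, by simp only [z₁, z₂]; linarith,
      (hK.chord_eq_closedBall hw ⟨_, hcenter⟩).trans Real.closedBall_eq_Icc⟩
  obtain ⟨heq₁, hlim₁⟩ := hK.abs_sub_tendsto hy hl (z := z₁)
    (hchord.mono fun w hw ↦ hw.2.2 ▸ left_mem_Icc.mpr hw.2.1)
    (hchord.mono fun w hw ↦ by rw [id, hw.2.2, Icc_mem_nhds_iff]; simp)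
  obtain ⟨heq₂, hlim₂⟩ := hK.abs_sub_tendsto hy hl (z := z₂)
    (hchord.mono fun w hw ↦ hw.2.2 ▸ right_mem_Icc.mpr hw.2.1)
    (hchord.mono fun w hw ↦ by rw [id, hw.2.2, Icc_mem_nhds_iff]; simp)
  refine ⟨z₁, z₂, ?_, ?_, ?_⟩
  · refine (hlim₁.const_sub (e 0)).congr' (hchord.mono fun w hw ↦ ?_)
    have hle : z₁ w ≤ e 0 := (hw.2.2 ▸ hw.1 :).1
    rw [abs_of_nonpos (sub_nonpos.mpr hle)]
    ring
  · refine (hlim₂.const_add (e 0)).congr' (hchord.mono fun w hw ↦ ?_)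
    have hle : e 0 ≤ z₂ w := (hw.2.2 ▸ hw.1 :).2
    rw [abs_of_nonneg (sub_nonneg.mpr hle)]
    ring
  · filter_upwards [heq₁, heq₂] with w h₁ h₂
    exact ⟨by ring, by rw [← sq_abs, h₁, id], by rw [← sq_abs, h₂, id]⟩

theorem isLittleO_two_mul_height (hK : IsTiltSymmetric K e) (hy : y ∈ openShadow K)
    (hv : ⟪v, y⟫ = 0) {n : ℕ} {χ ω : ℝ → ℝ}
    (hχ : (fun s : ℝ ↦ halfHeight K (y + s • v) ^ 2 - χ s) =o[𝓝 0] fun s ↦ s ^ n)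
    (hω : ∀ z₁ z₂ : ℝ → ℝ, Tendsto z₁ (𝓝 0) (𝓝 (e 0 - halfHeight K y)) →
      Tendsto z₂ (𝓝 0) (𝓝 (e 0 + halfHeight K y)) →
      (fun t ↦ χ (t * z₂ t) - χ (t * z₁ t) - (z₂ t - z₁ t) * ω t) =o[𝓝 0] fun t ↦ t ^ n) :
    (fun t : ℝ ↦ 2 * e (t • v) - 2 * e 0 - ω t) =o[𝓝 0] fun t ↦ t ^ n := by
  obtain ⟨z₁, z₂, hz₁, hz₂, hends⟩ := hK.exists_chord_endpoints hy
  have htilt : Tendsto (fun t : ℝ ↦ t • v) (𝓝 0) (𝓝[{w | ⟪w, y⟫ = 0}] 0) :=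
    tendsto_nhdsWithin_iff.mpr
      ⟨(by fun_prop : Continuous fun t : ℝ ↦ t • v).tendsto' _ _ (zero_smul ℝ v),
        .of_forall fun t ↦ by simp [real_inner_smul_left, hv]⟩
  replace hz₁ := hz₁.comp htilt
  replace hz₂ := hz₂.comp htilt
  have hexpand {z : ℝ → ℝ} {c : ℝ} (hz : Tendsto z (𝓝 0) (𝓝 c)) :
      (fun t ↦ halfHeight K (y + (t * z t) • v) ^ 2 - χ (t * z t)) =o[𝓝 0] fun t ↦ t ^ n := by
    have hsmall : Tendsto (fun t ↦ t * z t) (𝓝 0) (𝓝 0) := by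
      simpa using tendsto_id.mul hz
    have hbound : (fun t ↦ t * z t) =O[𝓝 0] fun t ↦ t := by
      simpa using (isBigO_refl (fun t : ℝ ↦ t) (𝓝 0)).mul (hz.isBigO_one ℝ)
    exact (hχ.comp_tendsto hsmall).trans_isBigO (hbound.pow n)
  have hgap : Tendsto (fun t : ℝ ↦ z₂ (t • v) - z₁ (t • v)) (𝓝 0) (𝓝 (2 * halfHeight K y)) := by
    have := hz₂.sub hz₁
    rwa [add_sub_sub_cancel, ← two_mul] at this
  have hgap_ne : 2 * halfHeight K y ≠ 0 := (mul_pos two_pos (hK.halfHeight_pos hy)).ne'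
  have hprod : (fun t : ℝ ↦ (z₂ (t • v) - z₁ (t • v)) * (2 * e (t • v) - 2 * e 0 - ω t))
      =o[𝓝 0] fun t ↦ t ^ n := by
    refine (((hexpand hz₂).sub (hexpand hz₁)).add (hω _ _ hz₁ hz₂)).congr' ?_ .rfl
    filter_upwards [htilt.eventually hends] with t ht
    obtain ⟨hsum, h₁, h₂⟩ := ht
    rw [smul_smul, mul_comm] at h₁ h₂
    simp only [Function.comp_apply, ← h₁, ← h₂, ← hsum]
    ring
  refine (((hgap.inv₀ hgap_ne).isBigO_one ℝ).mul_isLittleO hprod).congr' ?_ (by simp)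
  filter_upwards [hgap.eventually_ne hgap_ne] with t ht
  exact inv_mul_cancel_left₀ ht _

theorem hasKinkAtZero_two_mul_height (hK : IsTiltSymmetric K e) (hy : y ∈ openShadow K)
    (hv : ⟪v, y⟫ = 0) {p q : ℝ}
    (hkink : HasKinkAtZero (fun s : ℝ ↦ halfHeight K (y + s • v) ^ 2) p q) :
    HasKinkAtZero (fun t : ℝ ↦ 2 * e (t • v)) p
      (q * ((|e 0 + halfHeight K y| - |e 0 - halfHeight K y|) / (2 * halfHeight K y))) := by
  set W := halfHeight K y
  set c := (|e 0 + W| - |e 0 - W|) / (2 * W)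
  have hW : 2 * W ≠ 0 := (mul_pos two_pos (hK.halfHeight_pos hy)).ne'
  have hcW : c * (2 * W) = |e 0 + W| - |e 0 - W| := div_mul_cancel₀ _ hW
  have := hK.isLittleO_two_mul_height hy hv (n := 1) (χ := fun s ↦ W ^ 2 + (p * s + q * |s|))
    (ω := fun t ↦ p * t + q * c * |t|)
    (by simpa [HasKinkAtZero, W, sub_sub] using hkink) fun z₁ z₂ hz₁ hz₂ ↦ ?_
  · simpa [HasKinkAtZero] using this
  have hbracket : Tendsto (fun t ↦ q * (|z₂ t| - |z₁ t| - (z₂ t - z₁ t) * c)) (𝓝 0) (𝓝 0) := by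
    have := (((hz₂.abs.sub hz₁.abs).sub ((hz₂.sub hz₁).mul_const c)).const_mul q)
    convert this using 2
    linear_combination q * hcW
  have habs : (fun t : ℝ ↦ |t|) =O[𝓝 0] fun t ↦ t := (isBigO_refl _ _).abs_left
  refine (habs.mul_isLittleO ((isLittleO_one_iff ℝ).mpr hbracket)).congr (fun t ↦ ?_) (by simp)
  rw [abs_mul, abs_mul]
  ring

theorem hasLineDerivAt_sq_halfHeight_iff (hK : IsTiltSymmetric K e) (hy : y ∈ openShadow K)
    (hv : ⟪v, y⟫ = 0) {a : ℝ} :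
    HasLineDerivAt ℝ (fun x ↦ halfHeight K x ^ 2) a y v ↔
      HasLineDerivAt ℝ (fun w ↦ 2 * e w) a 0 v := by
  obtain ⟨p, q, hkink⟩ := exists_hasKinkAtZero_sq_of_concaveOn (isOpen_openShadow K)
    hK.concaveOn_halfHeight hy v
  have hheight := hK.hasKinkAtZero_two_mul_height hy hv hkink
  have hfactor : (|e 0 + halfHeight K y| - |e 0 - halfHeight K y|) / (2 * halfHeight K y) ≠ 0 := by
    have hpos := hK.halfHeight_pos hy
    refine div_ne_zero (sub_ne_zero.mpr fun habs ↦ ?_) (mul_pos two_pos hpos).ne'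
    rcases abs_eq_abs.mp habs with h | h
    · linarith
    · exact hK.height_zero_ne_zero (by linarith)
  simp only [HasLineDerivAt, zero_add]
  rw [hkink.hasDerivAt_iff, hheight.hasDerivAt_iff, mul_eq_zero, or_iff_left hfactor]

theorem hasLineDerivAt_sq_halfHeight_iff_zero (hK : IsTiltSymmetric K e) (hy : y ∈ openShadow K)
    (hv : ⟪v, y⟫ = 0) {a : ℝ} :
    HasLineDerivAt ℝ (fun x ↦ halfHeight K x ^ 2) a y v ↔
      HasLineDerivAt ℝ (fun x ↦ halfHeight K x ^ 2) a 0 v :=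
  (hK.hasLineDerivAt_sq_halfHeight_iff hy hv).trans
    (hK.hasLineDerivAt_sq_halfHeight_iff hK.zero_mem_openShadow (inner_zero_right v)).symm

theorem isLittleO_two_mul_height_sq (hK : IsTiltSymmetric K e) (hy : y ∈ openShadow K)
    (hv : ⟪v, y⟫ = 0) {p d : ℝ}
    (hexpand : (fun s : ℝ ↦ halfHeight K (y + s • v) ^ 2
      - (halfHeight K y ^ 2 + (p * s + d * s ^ 2))) =o[𝓝 0] fun s ↦ s ^ 2) :
    (fun t : ℝ ↦ 2 * e (t • v) - 2 * e 0 - (p * t + 2 * e 0 * d * t ^ 2))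
      =o[𝓝 0] fun t ↦ t ^ 2 := by
  refine hK.isLittleO_two_mul_height hy hv hexpand fun z₁ z₂ hz₁ hz₂ ↦ ?_
  have hbracket : Tendsto (fun t ↦ d * ((z₂ t - z₁ t) * (z₂ t + z₁ t - 2 * e 0))) (𝓝 0) (𝓝 0) := by
    have := ((hz₂.sub hz₁).mul ((hz₂.add hz₁).sub_const (2 * e 0))).const_mul d
    convert this using 2
    ring
  refine ((isBigO_refl (fun t : ℝ ↦ t ^ 2) (𝓝 0)).mul_isLittleO
    ((isLittleO_one_iff ℝ).mpr hbracket)).congr (fun t ↦ ?_) (by simp)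
  ring

theorem lineDifferentiableDirections_eq_top (hK : IsTiltSymmetric K e)
    (hdim : 1 < Module.finrank ℝ E) :
    lineDifferentiableDirections (isOpen_openShadow K) hK.concaveOn_halfHeight
      hK.zero_mem_openShadow = ⊤ := by
  set S := lineDifferentiableDirections (isOpen_openShadow K) hK.concaveOn_halfHeight
    hK.zero_mem_openShadow
  by_contra hS
  obtain ⟨v, hvS, hv⟩ := Submodule.exists_mem_ne_zero_of_ne_bot
    (mt Submodule.orthogonal_eq_bot_iff.mp hS)
  have hne : (openShadow K \ (ℝ ∙ v)).Nonempty := by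
    rw [sdiff_nonempty]
    intro hsubset
    have htop := (ℝ ∙ v).eq_top_of_nonempty_interior'
      ⟨0, interior_maximal hsubset (isOpen_openShadow K) hK.zero_mem_openShadow⟩
    have := finrank_span_singleton (K := ℝ) hv
    rw [htop, finrank_top] at this
    omega
  obtain ⟨y, ⟨hyU, hyv⟩, hdiff⟩ := exists_differentiableAt_of_concaveOn (isOpen_openShadow K)
    hK.concaveOn_halfHeight ((isOpen_openShadow K).sdiff (ℝ ∙ v).closed_of_finiteDimensional)
    sdiff_subset hne
  have hle : (ℝ ∙ y)ᗮ ≤ S := fun w hw ↦ by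
    have hwy : ⟪w, y⟫ = 0 := Submodule.mem_orthogonal_singleton_iff_inner_left.mp hw
    have hsq := (hdiff.pow 2).lineDifferentiableAt (v := w) |>.hasLineDerivAt
    exact ((hK.hasLineDerivAt_sq_halfHeight_iff_halfHeight hK.zero_mem_openShadow).mp
      ((hK.hasLineDerivAt_sq_halfHeight_iff_zero hyU hwy).mp hsq)).lineDifferentiableAt
  have hvy : v ∈ ℝ ∙ y := by
    simpa only [Submodule.orthogonal_orthogonal] using Submodule.orthogonal_le hle hvS
  obtain ⟨c, rfl⟩ := Submodule.mem_span_singleton.mp hvy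
  have hc : c ≠ 0 := fun h ↦ hv (by rw [h, zero_smul])
  exact hyv (Submodule.mem_span_singleton.mpr ⟨c⁻¹, inv_smul_smul₀ hc y⟩)

theorem exists_isTangentialDerivative (hK : IsTiltSymmetric K e)
    (hdim : 1 < Module.finrank ℝ E) : ∃ g, IsTangentialDerivative K g := by
  obtain ⟨g, hg⟩ := exists_linearMap_forall_hasLineDerivAt (isOpen_openShadow K)
    hK.concaveOn_halfHeight hK.zero_mem_openShadow (hK.lineDifferentiableDirections_eq_top hdim)
  refine ⟨(2 * halfHeight K 0) • g, fun y hy v hv ↦ ?_⟩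
  rw [hK.hasLineDerivAt_sq_halfHeight_iff_zero hy hv,
    hK.hasLineDerivAt_sq_halfHeight_iff_halfHeight hK.zero_mem_openShadow]
  have hne : 2 * halfHeight K 0 ≠ 0 :=
    (mul_pos two_pos (hK.halfHeight_pos hK.zero_mem_openShadow)).ne'
  simpa only [LinearMap.smul_apply, smul_eq_mul, mul_div_cancel_left₀ _ hne] using hg v

variable {g : E →ₗ[ℝ] ℝ}

theorem hasDerivAt_radialPart_comp (hK : IsTiltSymmetric K e) (hg : IsTangentialDerivative K g)
    {γ : ℝ → E} {t : ℝ} (hγ : HasDerivAt γ v t) (hmem : γ t ∈ openShadow K)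
    (hv : ⟪v, γ t⟫ = 0) : HasDerivAt (fun τ ↦ radialPart K g (γ τ)) 0 t := by
  obtain ⟨C, s, hs, hlip⟩ := hK.concaveOn_halfHeight.locallyLipschitzOn (isOpen_openShadow K) hmem
  rw [(isOpen_openShadow K).nhdsWithin_eq hmem] at hs
  have hheight := hasDerivAt_comp_of_hasLineDerivAt hlip hs
    ((hK.hasLineDerivAt_sq_halfHeight_iff_halfHeight hmem).mp (hg _ hmem v hv)) hγ
  have hlinear : HasDerivAt (fun τ ↦ g (γ τ)) (g v) t :=
    g.toContinuousLinearMap.hasFDerivAt.comp_hasDerivAt t hγ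
  refine ((hheight.fun_pow 2).sub hlinear).congr_deriv ?_
  have := (hK.halfHeight_pos hmem).ne'
  field_simp
  ring

-- The segment from `y` to `x`, rescaled to the sphere of radius `‖x‖`, is everywhere orthogonal
-- to its velocity.
theorem radialPart_eq_of_segment (hK : IsTiltSymmetric K e) (hg : IsTangentialDerivative K g)
    {x : E} (hsegment : ∀ τ ∈ Icc (0 : ℝ) 1, y + τ • (x - y) ≠ 0 ∧
      (‖x‖ / ‖y + τ • (x - y)‖) • (y + τ • (x - y)) ∈ openShadow K) :
    radialPart K g x = radialPart K g ((‖x‖ / ‖y‖) • y) := by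
  set γ : ℝ → E := fun τ ↦ (‖x‖ / ‖y + τ • (x - y)‖) • (y + τ • (x - y)) with hγ
  have hderiv : ∀ τ ∈ Icc (0 : ℝ) 1, HasDerivAt (fun σ ↦ radialPart K g (γ σ)) 0 τ := fun τ hτ ↦ by
    obtain ⟨hne, hmem⟩ := hsegment τ hτ
    have hline : DifferentiableAt ℝ (fun σ : ℝ ↦ y + σ • (x - y)) τ := by fun_prop
    have hdiff : DifferentiableAt ℝ γ τ :=
      ((differentiableAt_const ‖x‖).div (hline.norm ℝ hne) (norm_ne_zero_iff.mpr hne)).smul hline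
    refine hK.hasDerivAt_radialPart_comp hg hdiff.hasDerivAt hmem
      (inner_eq_zero_of_hasDerivAt_of_norm_eq (r := ‖x‖) hdiff.hasDerivAt ?_)
    filter_upwards [hline.continuousAt.eventually_ne hne] with σ hσ
    rw [norm_smul, norm_div, norm_norm, norm_norm, div_mul_cancel₀ _ (norm_ne_zero_iff.mpr hσ)]
  have hone : (1 : ℝ) ∈ Icc (0 : ℝ) 1 := right_mem_Icc.mpr zero_le_one
  have hconst := constant_of_has_deriv_right_zero
    (fun τ hτ ↦ (hderiv τ hτ).continuousAt.continuousWithinAt)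
    (fun τ hτ ↦ (hderiv τ (Ico_subset_Icc_self hτ)).hasDerivWithinAt) 1 hone
  have hx : x ≠ 0 := by simpa using (hsegment 1 hone).1
  simpa [hγ, div_self (norm_ne_zero_iff.mpr hx)] using hconst

theorem eventually_radialPart_eq (hK : IsTiltSymmetric K e) (hg : IsTangentialDerivative K g)
    (hy : y ∈ openShadow K) (hy0 : y ≠ 0) :
    ∀ᶠ x in 𝓝 y, radialPart K g x = radialPart K g ((‖x‖ / ‖y‖) • y) := by
  have hnorm : ‖y‖ ≠ 0 := norm_ne_zero_iff.mpr hy0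
  have hproj : ContinuousAt (fun q : E × E ↦ (‖q.1‖ / ‖q.2‖) • q.2) (y, y) := by
    fun_prop (disch := assumption)
  have hnear : ∀ᶠ q in 𝓝 (y, y), q.2 ≠ 0 ∧ (‖q.1‖ / ‖q.2‖) • q.2 ∈ openShadow K := by
    refine (continuousAt_snd.eventually_ne hy0).and (hproj.eventually_mem ?_)
    simpa [div_self hnorm] using (isOpen_openShadow K).mem_nhds hy
  obtain ⟨δ, hδ, hball⟩ := Metric.eventually_nhds_iff_ball.mp hnear
  filter_upwards [ball_mem_nhds y hδ] with x hx
  refine hK.radialPart_eq_of_segment hg fun τ hτ ↦ hball (x, _) ?_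
  rw [← ball_prod_same]
  exact ⟨hx, (convex_ball y δ).add_smul_sub_mem (mem_ball_self hδ) hx hτ⟩

theorem isLittleO_two_mul_height_of_radialPart (hK : IsTiltSymmetric K e)
    (hg : IsTangentialDerivative K g) {u : E} (hu : ‖u‖ = 1) (hv : ‖v‖ = 1) (hvu : ⟪v, u⟫ = 0)
    {r d : ℝ} (hr : 0 < r) (hru : r • u ∈ openShadow K)
    (hd : HasDerivWithinAt (fun a ↦ radialPart K g (√a • u)) d (Ioi (r ^ 2)) (r ^ 2)) :
    (fun t ↦ 2 * e (t • v) - 2 * e 0 - (g v * t + 2 * e 0 * d * t ^ 2)) =o[𝓝 0]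
      fun t ↦ t ^ 2 := by
  have hvru : ⟪v, r • u⟫ = 0 := by rw [real_inner_smul_right, hvu, mul_zero]
  refine hK.isLittleO_two_mul_height_sq hru hvru ?_
  have hshift : Tendsto (fun s : ℝ ↦ r ^ 2 + s ^ 2) (𝓝 0) (𝓝[≥] (r ^ 2)) :=
    tendsto_nhdsWithin_iff.mpr ⟨(by fun_prop : Continuous _).tendsto' _ _ (by simp),
      .of_forall fun s ↦ le_add_of_nonneg_right (sq_nonneg s)⟩
  have hexpand := (hasDerivWithinAt_iff_isLittleO.mp
    (hasDerivWithinAt_Ioi_iff_Ici.mp hd)).comp_tendsto hshift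
  have hmove : Tendsto (fun s : ℝ ↦ r • u + s • v) (𝓝 0) (𝓝 (r • u)) :=
    (by fun_prop : Continuous _).tendsto' _ _ (by simp)
  have hru0 : r • u ≠ 0 := smul_ne_zero hr.ne' (norm_ne_zero_iff.mp (hu ▸ one_ne_zero))
  refine hexpand.congr' ?_ (.of_forall fun s ↦ add_sub_cancel_left _ _)
  filter_upwards [hmove.eventually (hK.eventually_radialPart_eq hg hru hru0)] with s hs
  have hnorm : ‖r • u + s • v‖ = √(r ^ 2 + s ^ 2) := by
    have horth : ⟪r • u, s • v⟫ = 0 := by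
      rw [real_inner_smul_right, real_inner_comm, hvru, mul_zero]
    rw [← Real.sqrt_mul_self (norm_nonneg (r • u + s • v)),
      norm_add_sq_eq_norm_sq_add_norm_sq_real horth]
    simp [norm_smul, hu, hv, sq]
  have hru_norm : ‖r • u‖ = r := by rw [norm_smul, hu, mul_one, Real.norm_of_nonneg hr.le]
  rw [hnorm, smul_smul, hru_norm, div_mul_cancel₀ _ hr.ne'] at hs
  simp only [radialPart, map_add, map_smul, smul_eq_mul, Function.comp_apply,
    Real.sqrt_sq hr.le] at hs ⊢
  linear_combination -hs

theorem exists_forall_hasDerivWithinAt_radialPart_sqrt (hK : IsTiltSymmetric K e)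
    (hdim : 1 < Module.finrank ℝ E) (hg : IsTangentialDerivative K g) {u : E} (hu : ‖u‖ = 1) :
    ∃ k, ∀ r, 0 < r → r • u ∈ openShadow K →
      HasDerivWithinAt (fun a ↦ radialPart K g (√a • u)) k (Ioi (r ^ 2)) (r ^ 2) := by
  obtain ⟨v, hv, hvu⟩ := exists_norm_eq_one_inner_eq_zero hdim u
  have hzero : Tendsto (fun r : ℝ ↦ r • u) (𝓝[>] 0) (𝓝 0) :=
    ((by fun_prop : Continuous _).tendsto' 0 0 (zero_smul ℝ u)).mono_left nhdsWithin_le_nhds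
  obtain ⟨r₀, hr₀u, hr₀⟩ := ((hzero.eventually ((isOpen_openShadow K).mem_nhds
    hK.zero_mem_openShadow)).and eventually_mem_nhdsWithin).exists
  obtain ⟨k, hk⟩ := hK.exists_hasDerivWithinAt_radialPart_sqrt g hr₀ hr₀u
  refine ⟨k, fun r hr hru ↦ ?_⟩
  obtain ⟨d, hd⟩ := hK.exists_hasDerivWithinAt_radialPart_sqrt g hr hru
  exact hK.eq_of_isLittleO_two_mul_height
    (hK.isLittleO_two_mul_height_of_radialPart hg hu hv hvu hr hru hd)
    (hK.isLittleO_two_mul_height_of_radialPart hg hu hv hvu hr₀ hr₀u hk) ▸ hd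

theorem exists_radialPart_smul_eq (hK : IsTiltSymmetric K e) (hdim : 1 < Module.finrank ℝ E)
    (hg : IsTangentialDerivative K g) {u : E} (hu : ‖u‖ = 1) :
    ∃ k, ∀ s, 0 ≤ s → s • u ∈ openShadow K →
      radialPart K g (s • u) = radialPart K g 0 + k * s ^ 2 := by
  obtain ⟨k, hderiv⟩ := hK.exists_forall_hasDerivWithinAt_radialPart_sqrt hdim hg hu
  refine ⟨k, fun s hs hsu ↦ ?_⟩
  rcases hs.eq_or_lt with rfl | hs
  · simp
  have hmem : ∀ a ∈ Icc 0 (s ^ 2), √a • u ∈ openShadow K := fun a ha ↦ by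
    have hle : √a / s ∈ Icc (0 : ℝ) 1 :=
      ⟨by positivity, (div_le_one hs).mpr (Real.sqrt_le_iff.mpr ⟨hs.le, ha.2⟩)⟩
    have := hK.convex_openShadow.smul_mem_of_zero_mem hK.zero_mem_openShadow hsu hle
    rwa [smul_smul, div_mul_cancel₀ _ hs.ne'] at this
  have hconst := eq_of_hasDerivWithinAt_Ioi_zero
    (F := fun a ↦ radialPart K g (√a • u) - k * a) (pow_pos hs 2) (fun a ha ↦ ?_) fun a ha ↦ ?_
  · simp only [Real.sqrt_sq hs.le, Real.sqrt_zero, zero_smul, mul_zero, sub_zero] at hconst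
    exact sub_eq_iff_eq_add.mp hconst
  · have hpoint : ContinuousAt (fun a ↦ √a • u) a := by fun_prop
    have hheight : ContinuousAt (fun a ↦ halfHeight K (√a • u)) a :=
      (hK.continuousAt_halfHeight (hmem a ha)).comp (f := fun a ↦ √a • u) hpoint
    have hlinear : ContinuousAt (fun a ↦ g (√a • u)) a :=
      g.continuous_of_finiteDimensional.continuousAt.comp (f := fun a ↦ √a • u) hpoint
    exact (((hheight.pow 2).sub hlinear).sub (by fun_prop)).continuousWithinAt
  · have hsq := Real.sq_sqrt ha.1.le
    have hd := hderiv _ (Real.sqrt_pos.mpr ha.1) (hmem a (Ioo_subset_Icc_self ha))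
    rw [hsq] at hd
    refine (hd.sub ((hasDerivWithinAt_id a (Ioi a)).const_mul k)).congr_deriv ?_
    rw [mul_one, sub_self]

theorem radialPart_eq_of_mem_sphere (hK : IsTiltSymmetric K e) (hdim : 1 < Module.finrank ℝ E)
    (hg : IsTangentialDerivative K g) {ρ : ℝ} (hρ : 0 < ρ)
    (hsphere : sphere 0 ρ ⊆ openShadow K) {x : E} (hx : x ∈ sphere 0 ρ) (hy : y ∈ sphere 0 ρ) :
    radialPart K g x = radialPart K g y := by
  have hrank : 1 < Module.rank ℝ E := by
    rwa [← Module.finrank_eq_rank, Nat.one_lt_cast]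
  refine (isPreconnected_sphere hrank 0 ρ).induction₂
    (fun x y ↦ radialPart K g x = radialPart K g y) (fun x hx ↦ ?_)
    (fun _ _ _ _ _ _ h₁ h₂ ↦ h₁.trans h₂) (fun _ _ _ _ h ↦ h.symm) hx hy
  have hx0 : x ≠ 0 := ne_of_mem_sphere hx hρ.ne'
  filter_upwards [mem_nhdsWithin_of_mem_nhds (hK.eventually_radialPart_eq hg (hsphere hx) hx0),
    self_mem_nhdsWithin] with z hz hzρ
  rw [hz, mem_sphere_zero_iff_norm.mp hzρ, mem_sphere_zero_iff_norm.mp hx, div_self hρ.ne',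
    one_smul]

theorem exists_sq_halfHeight_eq (hK : IsTiltSymmetric K e) (hdim : 1 < Module.finrank ℝ E)
    (hg : IsTangentialDerivative K g) : ∃ k, ∀ y ∈ openShadow K,
      halfHeight K y ^ 2 = halfHeight K 0 ^ 2 + g y + k * ‖y‖ ^ 2 := by
  obtain ⟨ρ, hρ, hball⟩ := nhds_basis_closedBall.mem_iff.mp
    ((isOpen_openShadow K).mem_nhds hK.zero_mem_openShadow)
  have hsphere : sphere 0 ρ ⊆ openShadow K := sphere_subset_closedBall.trans hball
  have hunit (u : E) (hu : ‖u‖ = 1) : ρ • u ∈ sphere (0 : E) ρ := by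
    simp [norm_smul, hu, abs_of_pos hρ]
  obtain ⟨u₀, hu₀, -⟩ := exists_norm_eq_one_inner_eq_zero hdim (0 : E)
  obtain ⟨k, hk⟩ := hK.exists_radialPart_smul_eq hdim hg hu₀
  suffices h : ∀ y ∈ openShadow K, radialPart K g y = radialPart K g 0 + k * ‖y‖ ^ 2 by
    refine ⟨k, fun y hy ↦ ?_⟩
    have := h y hy
    simp only [radialPart, map_zero, sub_zero] at this
    linarith
  intro y hy
  rcases eq_or_ne y 0 with rfl | hy0
  · simp
  have hu : ‖‖y‖⁻¹ • y‖ = 1 := norm_smul_inv_norm hy0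
  obtain ⟨k', hk'⟩ := hK.exists_radialPart_smul_eq hdim hg hu
  have hkk' : k' * ρ ^ 2 = k * ρ ^ 2 := by
    have := hK.radialPart_eq_of_mem_sphere hdim hg hρ hsphere (hunit _ hu) (hunit _ hu₀)
    rw [hk' ρ hρ.le (hsphere (hunit _ hu)), hk ρ hρ.le (hsphere (hunit _ hu₀))] at this
    exact add_left_cancel this
  have hy' : ‖y‖ • ‖y‖⁻¹ • y = y := smul_inv_smul₀ (norm_ne_zero_iff.mpr hy0) y
  rw [← mul_right_cancel₀ (pow_pos hρ 2).ne' hkk']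
  simpa only [hy'] using hk' ‖y‖ (norm_nonneg y) (by rwa [hy'])

theorem tendsto_height (hK : IsTiltSymmetric K e) : Tendsto e (𝓝 0) (𝓝 (e 0)) := by
  obtain ⟨z₁, z₂, hz₁, hz₂, hends⟩ := hK.exists_chord_endpoints hK.zero_mem_openShadow
  have hmid := (hz₁.add hz₂).div_const 2
  rw [show (e 0 - halfHeight K 0 + (e 0 + halfHeight K 0)) / 2 = e 0 by ring] at hmid
  simpa using hmid.congr' (hends.mono fun w hw ↦ by rw [hw.1]; ring)

theorem exists_tilt_mul_pos (hK : IsTiltSymmetric K e) (hdim : 1 < Module.finrank ℝ E) {z : ℝ}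
    (hz : 0 < (e 0 - z) * z) {l : E →ₗ[ℝ] ℝ} (hl : 0 < l y) :
    ∃ w, ⟪w, y⟫ = z * ‖w‖ ^ 2 ∧ 0 < (e w - z) * l w := by
  obtain ⟨w, hlim, hw⟩ :=
    exists_tendsto_zero_inner_eq_mul_norm_sq hdim (right_ne_zero_of_mul hz.ne') hl
  have hsign : ∀ᶠ τ in 𝓝[>] (0 : ℝ), 0 < (e (w τ) - z) * z :=
    (((hK.tendsto_height.comp hlim).sub_const z).mul_const z).eventually_const_lt hz
  obtain ⟨τ, hτ, hpos⟩ := (hsign.and eventually_mem_nhdsWithin).exists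
  obtain ⟨hplane, hlw⟩ := hw τ (mem_Ioi.mp hpos)
  refine ⟨w τ, hplane, pos_of_mul_pos_left (b := z ^ 2) ?_ (sq_nonneg z)⟩
  linear_combination mul_pos hτ hlw

theorem halfHeight_eq_zero_of_notMem_openShadow (hK : IsTiltSymmetric K e)
    (hdim : 1 < Module.finrank ℝ E) (hy : y ∈ Prod.fst '' K) (hyU : y ∉ openShadow K) :
    halfHeight K y = 0 := by
  refine (halfHeight_nonneg K y).eq_of_not_lt' fun hpos ↦ ?_
  obtain ⟨l, hl, hmax⟩ := hK.exists_isMaxOn_of_notMem_openShadow hyU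
  obtain ⟨θ, hθ, hθpos, hθlt⟩ : ∃ θ : ℝ, |θ * e 0 - e 0| < halfHeight K y ∧ 0 < θ ∧ θ < 1 := by
    have hlim : Tendsto (fun θ ↦ |θ * e 0 - e 0|) (𝓝[<] 1) (𝓝 0) :=
      ((by fun_prop : Continuous _).tendsto' _ _ (by simp)).mono_left nhdsWithin_le_nhds
    exact ((hlim.eventually_lt_const hpos).and (Ioo_mem_nhdsLT one_pos)).exists
  have hz : 0 < (e 0 - θ * e 0) * (θ * e 0) := by
    have := hK.height_zero_ne_zero
    have := sub_pos.mpr hθlt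
    rw [show (e 0 - θ * e 0) * (θ * e 0) = (1 - θ) * θ * e 0 ^ 2 by ring]
    positivity
  obtain ⟨w, hplane, hw⟩ := hK.exists_tilt_mul_pos hdim hz (l := l.toLinearMap) hl
  have hreflect := hK.reflect_mem w y _ hplane ((hK.mem_iff_abs_sub_le hy).mpr hθ.le)
  have hle := hmax _ ⟨_, hreflect, rfl⟩
  rw [map_add, map_smul, smul_eq_mul] at hle
  rw [ContinuousLinearMap.coe_coe] at hw
  linarith

theorem sq_halfHeight_eq_of_mem_image (hK : IsTiltSymmetric K e) (hdim : 1 < Module.finrank ℝ E)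
    {P : E → ℝ} (hP : Continuous P) (heq : ∀ x ∈ openShadow K, halfHeight K x ^ 2 = P x)
    (hy : y ∈ Prod.fst '' K) : halfHeight K y ^ 2 = P y := by
  by_cases hyU : y ∈ openShadow K
  · exact heq y hyU
  have hzero := hK.halfHeight_eq_zero_of_notMem_openShadow hdim hy hyU
  have hmem : ∀ t ∈ Ico (0 : ℝ) 1, 0 ≤ P (t • y) ∧ (t • y, e 0 + √(P (t • y))) ∈ K := fun t ht ↦ by
    have ht := hK.smul_mem_openShadow hy ht
    rw [← heq _ ht, hK.mem_iff_abs_sub_le (openShadow_subset K ht),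
      Real.sqrt_sq (halfHeight_nonneg K _), add_sub_cancel_left]
    exact ⟨sq_nonneg _, (abs_of_nonneg (halfHeight_nonneg K _)).le⟩
  have hclosed : IsClosed {t : ℝ | 0 ≤ P (t • y) ∧ (t • y, e 0 + √(P (t • y))) ∈ K} :=
    .and (isClosed_le continuous_const (by fun_prop))
      (hK.isCompact.isClosed.preimage (by fun_prop : Continuous fun t : ℝ ↦
        (t • y, e 0 + √(P (t • y)))))
  have hone : (1 : ℝ) ∈ closure (Ico (0 : ℝ) 1) := by
    rw [closure_Ico zero_ne_one]
    exact right_mem_Icc.mpr zero_le_one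
  obtain ⟨hnonneg, htop⟩ := closure_minimal hmem hclosed hone
  rw [one_smul] at hnonneg htop
  have hle := (hK.mem_iff_abs_sub_le hy).mp htop
  rw [add_sub_cancel_left, abs_of_nonneg (Real.sqrt_nonneg _), hzero] at hle
  rw [hzero, (Real.sqrt_eq_zero hnonneg).mp (hle.antisymm (Real.sqrt_nonneg _))]
  simp

theorem exists_quadratic_eq_zero_of_notMem_openShadow (hK : IsTiltSymmetric K e)
    (hdim : 1 < Module.finrank ℝ E) {k : ℝ} (heq : ∀ y ∈ openShadow K,
      halfHeight K y ^ 2 = halfHeight K 0 ^ 2 + g y + k * ‖y‖ ^ 2) (hy : y ∉ openShadow K) :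
    ∃ τ ∈ Ioc (0 : ℝ) 1, τ • y ∈ Prod.fst '' K ∧
      halfHeight K 0 ^ 2 + g y * τ + k * ‖y‖ ^ 2 * τ ^ 2 = 0 := by
  have hg : Continuous g := g.continuous_of_finiteDimensional
  obtain ⟨τ, hτ, hmem, hnot⟩ := hK.exists_smul_mem_image_notMem_openShadow hy
  have := hK.sq_halfHeight_eq_of_mem_image hdim (by fun_prop) heq hmem
  rw [hK.halfHeight_eq_zero_of_notMem_openShadow hdim hmem hnot, norm_smul, mul_pow,
    Real.norm_eq_abs, sq_abs, map_smul, smul_eq_mul] at this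
  exact ⟨τ, hτ, hmem, by linarith⟩

theorem quadratic_coeff_neg (hK : IsTiltSymmetric K e) (hdim : 1 < Module.finrank ℝ E) {k : ℝ}
    (heq : ∀ y ∈ openShadow K, halfHeight K y ^ 2 = halfHeight K 0 ^ 2 + g y + k * ‖y‖ ^ 2) :
    k < 0 := by
  have hpos := hK.halfHeight_pos hK.zero_mem_openShadow
  obtain ⟨R, hR⟩ := (hK.isCompact.image continuous_fst).isBounded.exists_norm_le
  have hR0 : 0 ≤ R := by simpa using hR _ (openShadow_subset K hK.zero_mem_openShadow)
  obtain ⟨v, hv, -, hgv⟩ := exists_norm_eq_one_inner_eq_zero_nonneg hdim 0 g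
  have hout : (R + 1) • v ∉ openShadow K := fun h ↦ by
    have := hR _ (openShadow_subset K h)
    rw [norm_smul, hv, mul_one, Real.norm_of_nonneg (by positivity)] at this
    linarith
  by_contra! hk
  obtain ⟨τ, hτ, -, hzero⟩ := hK.exists_quadratic_eq_zero_of_notMem_openShadow hdim heq hout
  have hτ0 := hτ.1
  rw [map_smul, smul_eq_mul] at hzero
  exact hzero.not_gt (by positivity)

theorem mem_image_fst_iff (hK : IsTiltSymmetric K e) (hdim : 1 < Module.finrank ℝ E) {k : ℝ}
    (heq : ∀ y ∈ openShadow K, halfHeight K y ^ 2 = halfHeight K 0 ^ 2 + g y + k * ‖y‖ ^ 2) :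
    y ∈ Prod.fst '' K ↔ 0 ≤ halfHeight K 0 ^ 2 + g y + k * ‖y‖ ^ 2 := by
  have hg : Continuous g := g.continuous_of_finiteDimensional
  refine ⟨fun hy ↦ ?_, fun hnonneg ↦ by_contra fun hy ↦ ?_⟩
  · rw [← hK.sq_halfHeight_eq_of_mem_image hdim (by fun_prop) heq hy]
    exact sq_nonneg _
  obtain ⟨τ, hτ, hmem, hzero⟩ := hK.exists_quadratic_eq_zero_of_notMem_openShadow hdim heq
    (notMem_subset (openShadow_subset K) hy)
  have hτ1 : τ < 1 := hτ.2.lt_of_ne fun h ↦ hy (by simpa [h] using hmem)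
  have hpos := pow_pos (hK.halfHeight_pos hK.zero_mem_openShadow) 2
  have hk := hK.quadratic_coeff_neg hdim heq
  -- Concavity along the ray: positive at `0`, nonnegative at `1`, hence positive at `τ`.
  nlinarith [mul_pos (sub_pos.mpr hτ1) hpos, mul_nonneg hτ.1.le hnonneg,
    mul_nonneg (mul_nonneg (neg_pos.mpr hk).le (sq_nonneg ‖y‖))
      (mul_nonneg hτ.1.le (sub_pos.mpr hτ1).le)]

theorem mem_iff_sq_sub_le (hK : IsTiltSymmetric K e) (hdim : 1 < Module.finrank ℝ E) {k : ℝ}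
    (heq : ∀ y ∈ openShadow K, halfHeight K y ^ 2 = halfHeight K 0 ^ 2 + g y + k * ‖y‖ ^ 2)
    {z : ℝ} : (y, z) ∈ K ↔ (z - e 0) ^ 2 ≤ halfHeight K 0 ^ 2 + g y + k * ‖y‖ ^ 2 := by
  have hg : Continuous g := g.continuous_of_finiteDimensional
  have hsq (hy : y ∈ Prod.fst '' K) :=
    hK.sq_halfHeight_eq_of_mem_image hdim (by fun_prop) heq hy
  constructor
  · intro hyz
    have hy : y ∈ Prod.fst '' K := ⟨_, hyz, rfl⟩
    rw [← hsq hy, ← sq_abs]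
    exact pow_le_pow_left₀ (abs_nonneg _) ((hK.mem_iff_abs_sub_le hy).mp hyz) 2
  · intro hle
    have hy := (hK.mem_image_fst_iff hdim heq).mpr ((sq_nonneg _).trans hle)
    rw [← hsq hy] at hle
    exact (hK.mem_iff_abs_sub_le hy).mpr (abs_le_of_sq_le_sq hle (halfHeight_nonneg K y))

theorem exists_mem_iff (hK : IsTiltSymmetric K e) (hdim : 1 < Module.finrank ℝ E) :
    ∃ (c : E) (κ C : ℝ), 0 < κ ∧ 0 < C ∧
      ∀ y z, (y, z) ∈ K ↔ κ * ‖y - c‖ ^ 2 + (z - e 0) ^ 2 ≤ C := by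
  obtain ⟨g, hg⟩ := hK.exists_isTangentialDerivative hdim
  obtain ⟨k, heq⟩ := hK.exists_sq_halfHeight_eq hdim hg
  have hk := hK.quadratic_coeff_neg hdim heq
  set a := (InnerProductSpace.toDual ℝ E).symm g.toContinuousLinearMap
  have ha (y : E) : ⟪a, y⟫ = g y := InnerProductSpace.toDual_symm_apply
  have hpos := pow_pos (hK.halfHeight_pos hK.zero_mem_openShadow) 2
  refine ⟨(-(2 * k))⁻¹ • a, -k, halfHeight K 0 ^ 2 + ‖a‖ ^ 2 / (-(4 * k)), neg_pos.mpr hk,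
    add_pos_of_pos_of_nonneg hpos (div_nonneg (sq_nonneg _) (by linarith)), fun y z ↦ ?_⟩
  have hsquare : ‖y - (-(2 * k))⁻¹ • a‖ ^ 2
      = ‖y‖ ^ 2 + g y / k + ‖a‖ ^ 2 / (4 * k ^ 2) := by
    rw [norm_sub_sq_real, real_inner_smul_right, real_inner_comm, ha, norm_smul, mul_pow,
      Real.norm_eq_abs, sq_abs]
    field_simp
    ring
  have hcomplete : halfHeight K 0 ^ 2 + ‖a‖ ^ 2 / (-(4 * k)) =
      halfHeight K 0 ^ 2 + g y + k * ‖y‖ ^ 2 + -k * ‖y - (-(2 * k))⁻¹ • a‖ ^ 2 := by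
    have := hk.ne
    rw [hsquare]
    field_simp
    ring
  rw [hK.mem_iff_sq_sub_le hdim heq, hcomplete]
  constructor <;> intro h <;> linarith

end IsTiltSymmetric

theorem exists_isTiltSymmetric {K : Set (E × ℝ)} (hdim : 1 < Module.finrank ℝ E)
    (hcompact : IsCompact K) (hconvex : Convex ℝ K) (hzero : (0 : E × ℝ) ∈ interior K)
    (hsymm : ∀ (u : E) (m : ℝ), ‖u‖ = 1 → ∃ h, ∀ y z, ⟪u, y⟫ = m * z → (y, z) ∈ K →
      (y + (2 * (h - z)) • m • u, 2 * h - z) ∈ K)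
    (hnosymm : ¬ ∀ y z, (y, z) ∈ K → (y, -z) ∈ K) : ∃ e, IsTiltSymmetric K e := by
  choose! h hh using hsymm
  have hchord (z : ℝ) : z ∈ chord K 0 0 ↔ (0, z) ∈ K := by simp [chord]
  have hne : (chord K 0 0).Nonempty := ⟨0, (hchord 0).mpr (interior_subset hzero)⟩
  have hsymm_chord (u : E) (hu : ‖u‖ = 1) : ∀ z ∈ chord K 0 0, 2 * h u 0 - z ∈ chord K 0 0 :=
    fun z hz ↦ by
      rw [hchord] at hz ⊢
      simpa using hh u 0 hu 0 z (by simp) hz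
  obtain ⟨u₀, hu₀, -⟩ := exists_norm_eq_one_inner_eq_zero hdim (0 : E)
  have hcenter (u : E) (hu : ‖u‖ = 1) : h u 0 = h u₀ 0 :=
    center_eq_of_symmetric (isCompact_chord hcompact 0 0) (convex_chord hconvex 0 0) hne
      (hsymm_chord u hu) (hsymm_chord u₀ hu₀)
  have hheight (w : E) : ∃ c, ∀ y z, ⟪w, y⟫ = z * ‖w‖ ^ 2 → (y, z) ∈ K →
      (y + (2 * (c - z)) • w, 2 * c - z) ∈ K := by
    rcases eq_or_ne w 0 with rfl | hw
    · refine ⟨h u₀ 0, fun y z _ hyz ↦ ?_⟩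
      obtain ⟨u, hu, huy⟩ := exists_norm_eq_one_inner_eq_zero hdim y
      simpa [hcenter u hu] using hh u 0 hu y z (by simpa using huy) hyz
    · have hw' := norm_ne_zero_iff.mpr hw
      refine ⟨h (‖w‖⁻¹ • w) ‖w‖, fun y z hwy hyz ↦ ?_⟩
      have := hh (‖w‖⁻¹ • w) ‖w‖ (norm_smul_inv_norm hw) y z
        (by rw [real_inner_smul_left, hwy]; field_simp) hyz
      rwa [smul_inv_smul₀ hw'] at this
  choose e he using hheight
  refine ⟨e, hcompact, hconvex, hzero, he, fun hzero ↦ hnosymm fun y z hyz ↦ ?_⟩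
  simpa [hzero] using he 0 y z (by simp) hyz

end TiltSymmetric

section Spheroid

variable {V : Type*} [NormedAddCommGroup V] [InnerProductSpace ℝ V] {q ν : V} {κ C : ℝ}

/-- The ellipsoid of revolution with centre `q` and axis direction the unit vector `ν`; its
semi-axes are `√C` along `ν` and `√(C / κ)` across. -/
def spheroid (q ν : V) (κ C : ℝ) : Set V :=
  {x | κ * (‖x - q‖ ^ 2 - ⟪ν, x - q⟫ ^ 2) + ⟪ν, x - q⟫ ^ 2 ≤ C}

/-- Scaling by `b` along the unit vector `ν` and by `a` orthogonally to it. -/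
def axialScaling (ν : V) (a b : ℝ) : V →ₗ[ℝ] V :=
  a • LinearMap.id + (b - a) • (innerₛₗ ℝ ν).smulRight ν

theorem axialScaling_apply (ν : V) (a b : ℝ) (x : V) :
    axialScaling ν a b x = a • x + ((b - a) * ⟪ν, x⟫) • ν := by
  simp [axialScaling, smul_smul]

theorem inner_axialScaling (hν : ‖ν‖ = 1) (a b : ℝ) (x : V) :
    ⟪ν, axialScaling ν a b x⟫ = b * ⟪ν, x⟫ := by
  rw [axialScaling_apply, inner_add_right, real_inner_smul_right, real_inner_smul_right,
    real_inner_self_eq_norm_sq, hν]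
  ring

theorem norm_axialScaling_sq (hν : ‖ν‖ = 1) (a b : ℝ) (x : V) :
    ‖axialScaling ν a b x‖ ^ 2 = a ^ 2 * (‖x‖ ^ 2 - ⟪ν, x⟫ ^ 2) + (b * ⟪ν, x⟫) ^ 2 := by
  rw [axialScaling_apply, norm_add_sq_real, norm_smul, norm_smul, hν, mul_pow, mul_one,
    Real.norm_eq_abs, Real.norm_eq_abs, sq_abs, sq_abs, real_inner_smul_left,
    real_inner_smul_right, real_inner_comm]
  ring

theorem axialScaling_axialScaling_inv (hν : ‖ν‖ = 1) {a b : ℝ} (ha : a ≠ 0) (hb : b ≠ 0) :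
    axialScaling ν a b ∘ₗ axialScaling ν a⁻¹ b⁻¹ = LinearMap.id := by
  ext x
  rw [LinearMap.comp_apply, axialScaling_apply, inner_axialScaling hν, axialScaling_apply, smul_add,
    smul_inv_smul₀ ha, smul_smul, add_assoc, ← add_smul, LinearMap.id_apply, add_eq_left]
  field_simp
  simp

/-- Axial scaling as a linear equivalence. -/
def axialScalingEquiv (hν : ‖ν‖ = 1) {a b : ℝ} (ha : a ≠ 0) (hb : b ≠ 0) : V ≃ₗ[ℝ] V :=
  .ofLinearMap (axialScaling ν a b) (axialScaling ν a⁻¹ b⁻¹)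
    (axialScaling_axialScaling_inv hν ha hb)
    (by simpa only [inv_inv] using
      axialScaling_axialScaling_inv hν (inv_ne_zero ha) (inv_ne_zero hb))

theorem add_axialScaling_mem_spheroid_iff (hν : ‖ν‖ = 1) (hκ : 0 < κ) (hC : 0 < C) (x : V) :
    q + axialScaling ν √(C / κ) √C x ∈ spheroid q ν κ C ↔ x ∈ closedBall 0 1 := by
  have : κ * (√(C / κ) ^ 2 * (‖x‖ ^ 2 - ⟪ν, x⟫ ^ 2)) + (√C * ⟪ν, x⟫) ^ 2 = C * ‖x‖ ^ 2 := by
    rw [mul_pow, Real.sq_sqrt (div_pos hC hκ).le, Real.sq_sqrt hC.le]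
    field_simp
    ring
  rw [spheroid, mem_ofPred_eq, add_sub_cancel_left, inner_axialScaling hν, norm_axialScaling_sq hν,
    add_sub_cancel_right, this, mem_closedBall_zero_iff, mul_le_iff_le_one_right hC,
    sq_le_one_iff₀ (norm_nonneg x)]

theorem exists_image_closedBall_eq_spheroid (hν : ‖ν‖ = 1) (hκ : 0 < κ) (hC : 0 < C) :
    ∃ T : V ≃ᵃ[ℝ] V, T '' closedBall 0 1 = spheroid q ν κ C := by
  let A : V ≃ₗ[ℝ] V :=
    axialScalingEquiv hν (Real.sqrt_pos.mpr (div_pos hC hκ)).ne' (Real.sqrt_pos.mpr hC).ne'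
  let T : V ≃ᵃ[ℝ] V := A.toAffineEquiv.trans (AffineEquiv.constVAdd ℝ V q)
  refine ⟨T, ?_⟩
  have hT : T ⁻¹' spheroid q ν κ C = closedBall 0 1 := by
    ext x
    rw [mem_preimage, ← add_axialScaling_mem_spheroid_iff hν hκ hC]
    rfl
  rw [← hT, image_preimage_eq _ T.surjective]

theorem image_spheroid (f : V ≃ᵃⁱ[ℝ] V) (hq : f q = q) (hqν : f (q + ν) = q + ν) :
    f '' spheroid q ν κ C = spheroid q ν κ C := by
  have hlinear (x : V) : f.linearIsometryEquiv (x - q) = f x - q := by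
    simpa only [vsub_eq_sub, hq] using f.map_vsub x q
  have hfix : f.linearIsometryEquiv ν = ν := by
    simpa only [hqν, add_sub_cancel_left] using hlinear (q + ν)
  have hpreimage : f ⁻¹' spheroid q ν κ C = spheroid q ν κ C := by
    ext x
    have hinner : ⟪ν, f x - q⟫ = ⟪ν, x - q⟫ := by
      rw [← f.linearIsometryEquiv.inner_map_map ν (x - q), hfix, hlinear]
    rw [spheroid, mem_preimage, mem_ofPred_eq, hinner, ← hlinear, LinearIsometryEquiv.norm_map,
      mem_ofPred_eq]
  conv_lhs => rw [← hpreimage]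
  exact image_preimage_eq _ f.surjective

end Spheroid

section Sections

variable {V : Type*} [NormedAddCommGroup V] [InnerProductSpace ℝ V] {u ν d : V} {m : ℝ}

theorem inner_sub_eq_zero_of_isometry {f : V → V} (hf : Isometry f) {q w : V} (hq : f q = q)
    (hw : f (q + w) = q + w) (x : V) : ⟪f x - x, w⟫ = 0 := by
  have hnorm {a : V} (ha : f a = a) : ‖f x - a‖ ^ 2 = ‖x - a‖ ^ 2 := by
    rw [← dist_eq_norm, ← dist_eq_norm, ← hf.dist_eq x a, ha]
  have hsub (y : V) : ‖y - (q + w)‖ ^ 2 = ‖y - q‖ ^ 2 - 2 * ⟪y - q, w⟫ + ‖w‖ ^ 2 := by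
    rw [← sub_sub, norm_sub_sq_real]
  have := hnorm hw
  rw [hsub, hsub, hnorm hq] at this
  rw [← sub_sub_sub_cancel_right (f x) x q, inner_sub_left]
  linarith

theorem eq_inner_smul_of_mem_orthogonal [FiniteDimensional ℝ V] {M : Submodule ℝ V}
    (hrank : Module.finrank ℝ V = Module.finrank ℝ M + 2) (hu : ‖u‖ = 1) (hν : ‖ν‖ = 1)
    (huν : ⟪u, ν⟫ = 0) (hMν : M ≤ (ℝ ∙ ν)ᗮ) (hMu : M ≤ (ℝ ∙ (u - m • ν))ᗮ) (hd : d ∈ Mᗮ)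
    (hdu : ⟪u - m • ν, d⟫ = 0) : d = ⟪ν, d⟫ • (m • u + ν) := by
  have hspan : Submodule.span ℝ {u, ν} ≤ Mᗮ := by
    have hνM : ν ∈ Mᗮ := Submodule.le_orthogonal_iff_le_orthogonal.mp hMν
      (Submodule.mem_span_singleton_self ν)
    have huM : u - m • ν ∈ Mᗮ := Submodule.le_orthogonal_iff_le_orthogonal.mp hMu
      (Submodule.mem_span_singleton_self _)
    rw [Submodule.span_le, pair_subset_iff]
    exact ⟨by simpa using Mᗮ.add_mem huM (Mᗮ.smul_mem m hνM), hνM⟩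
  have hindep : LinearIndependent ℝ ![u, ν] := by
    refine Orthonormal.linearIndependent (orthonormal_vecCons_iff.mpr ⟨hu, by simpa, ?_⟩)
    simpa [orthonormal_vecCons_iff]
  have heq : Submodule.span ℝ {u, ν} = Mᗮ := by
    refine Submodule.eq_of_le_of_finrank_eq hspan ?_
    have := M.finrank_add_finrank_orthogonal
    have h2 := finrank_span_eq_card hindep
    rw [Matrix.range_cons, Matrix.range_cons, Matrix.range_empty, union_empty, singleton_union,
      Fintype.card_fin] at h2
    omega
  obtain ⟨a, b, rfl⟩ := Submodule.mem_span_pair.mp (heq ▸ hd)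
  have hνν : ⟪ν, a • u + b • ν⟫ = b := by
    simp [inner_add_right, inner_smul_right, real_inner_comm, huν, hν]
  have hab : a = m * b := by
    have : ⟪u, a • u + b • ν⟫ = a := by
      simp [inner_add_right, inner_smul_right, huν, hu]
    rw [inner_sub_left, real_inner_smul_left, hνν, this] at hdu
    linarith
  rw [hνν, hab]
  module

theorem sub_eq_smul_of_isometry [FiniteDimensional ℝ V] {f : V → V} (hf : Isometry f)
    {L : AffineSubspace ℝ V} {q : V} (hq : q ∈ L) (hfix : ∀ x ∈ L, f x = x)
    (hrank : Module.finrank ℝ V = Module.finrank ℝ L.direction + 2) (hu : ‖u‖ = 1) (hν : ‖ν‖ = 1)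
    (huν : ⟪u, ν⟫ = 0) (hLν : L.direction ≤ (ℝ ∙ ν)ᗮ) (hLu : L.direction ≤ (ℝ ∙ (u - m • ν))ᗮ)
    {x : V} (hx : ⟪u - m • ν, f x - x⟫ = 0) : f x - x = ⟪ν, f x - x⟫ • (m • u + ν) := by
  refine eq_inner_smul_of_mem_orthogonal hrank hu hν huν hLν hLu ?_ hx
  refine (Submodule.mem_orthogonal' _ _).mpr fun w hw ↦ ?_
  refine inner_sub_eq_zero_of_isometry hf (hfix q hq) (hfix _ ?_) x
  simpa only [vadd_eq_add, add_comm] using AffineSubspace.vadd_mem_of_mem_direction hw hq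

theorem eq_zero_or_eq_of_norm_add_eq (hu : ‖u‖ = 1) (hν : ‖ν‖ = 1) (huν : ⟪u, ν⟫ = 0) {a : V}
    {β : ℝ} (ha : ⟪u - m • ν, a⟫ = 0) (hnorm : ‖a + β • (m • u + ν)‖ = ‖a‖) :
    β = 0 ∨ β = -2 * ⟪ν, a⟫ := by
  have hdir : ‖m • u + ν‖ ^ 2 = m ^ 2 + 1 := by
    rw [norm_add_sq_real, norm_smul, real_inner_smul_left, huν, hu, hν, mul_pow,
      Real.norm_eq_abs, sq_abs]
    ring
  have hinner : ⟪a, m • u + ν⟫ = (m ^ 2 + 1) * ⟪ν, a⟫ := by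
    rw [inner_sub_left, real_inner_smul_left, sub_eq_zero] at ha
    rw [real_inner_comm, inner_add_left, real_inner_smul_left, ha]
    ring
  have hsq := congrArg (· ^ 2) hnorm
  rw [norm_add_sq_real, norm_smul, real_inner_smul_right, mul_pow, hdir, hinner,
    Real.norm_eq_abs, sq_abs] at hsq
  have hprod : (m ^ 2 + 1) * (β * (β + 2 * ⟪ν, a⟫)) = 0 := by linear_combination hsq
  rcases mul_eq_zero.mp ((mul_eq_zero_iff_left (by positivity)).mp hprod) with hβ | hβ
  · exact .inl hβ
  · exact .inr (by linarith)

theorem inner_sub_eq_of_isometry {f : V → V} (hf : Isometry f) {L : AffineSubspace ℝ V} {q x : V}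
    (hq : q ∈ L) (hfq : f q = q) (hfix : f x = x → x ∈ L) (hu : ‖u‖ = 1) (hν : ‖ν‖ = 1)
    (huν : ⟪u, ν⟫ = 0) (hLν : L.direction ≤ (ℝ ∙ ν)ᗮ) (hxq : ⟪u - m • ν, x - q⟫ = 0)
    (hdisp : f x - x = ⟪ν, f x - x⟫ • (m • u + ν)) : ⟪ν, f x - x⟫ = -2 * ⟪ν, x - q⟫ := by
  have hnorm : ‖x - q + ⟪ν, f x - x⟫ • (m • u + ν)‖ = ‖x - q‖ := by
    rw [← hdisp, sub_add_sub_cancel', ← dist_eq_norm, ← dist_eq_norm, ← hf.dist_eq x q, hfq]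
  rcases eq_zero_or_eq_of_norm_add_eq hu hν huν hxq hnorm with hzero | hflip
  · have hxL : x ∈ L := hfix (by simpa [hzero, sub_eq_zero] using hdisp)
    have hxq' : x - q ∈ (ℝ ∙ ν)ᗮ := hLν (AffineSubspace.vsub_mem_direction hxL hq)
    rw [hzero, Submodule.mem_orthogonal_singleton_iff_inner_right.mp hxq', mul_zero]
  · exact hflip

end Sections

section AxialChart

variable {V : Type*} [NormedAddCommGroup V] [InnerProductSpace ℝ V] {ν : V}

/-- The decomposition of a vector into its component orthogonal to the unit vector `ν` and its
height in the direction `ν`. -/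
def axialDecomposition (hν : ‖ν‖ = 1) : ((ℝ ∙ ν)ᗮ × ℝ) ≃L[ℝ] V :=
  .equivOfInverse ((ℝ ∙ ν)ᗮ.subtypeL.coprod (ContinuousLinearMap.toSpanSingleton ℝ ν))
    ((ℝ ∙ ν)ᗮ.orthogonalProjectionOnto.prod (innerSL ℝ ν))
    (fun w ↦ by
      have hw := Submodule.mem_orthogonal_singleton_iff_inner_right.mp w.1.2
      simp [Submodule.orthogonalProjectionOnto_orthogonalComplement_singleton_eq_zero,
        inner_add_right, inner_smul_right, hw, hν])
    (fun x ↦ by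
      simp [Submodule.starProjection_orthogonal_val, Submodule.starProjection_unit_singleton, hν])

/-- The coordinates of `axialDecomposition` with origin moved to `p`. -/
def axialChart (hν : ‖ν‖ = 1) (p : V) : (ℝ ∙ ν)ᗮ × ℝ ≃ₜ V :=
  (axialDecomposition hν).toHomeomorph.trans (Homeomorph.addLeft p)

theorem axialChart_apply (hν : ‖ν‖ = 1) (p : V) (y : (ℝ ∙ ν)ᗮ) (z : ℝ) :
    axialChart hν p (y, z) = p + (y + z • ν) := rfl

theorem inner_axialChart_sub (hν : ‖ν‖ = 1) (p : V) (y : (ℝ ∙ ν)ᗮ) (z : ℝ) :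
    ⟪ν, axialChart hν p (y, z) - p⟫ = z := by
  rw [axialChart_apply, add_sub_cancel_left, inner_add_right, real_inner_smul_right,
    Submodule.mem_orthogonal_singleton_iff_inner_right.mp y.2, real_inner_self_eq_norm_sq, hν]
  ring

theorem axialChart_mem_spheroid_iff (hν : ‖ν‖ = 1) (p : V) (y c : (ℝ ∙ ν)ᗮ) (z h κ C : ℝ) :
    axialChart hν p (y, z) ∈ spheroid (axialChart hν p (c, h)) ν κ C ↔
      κ * ‖y - c‖ ^ 2 + (z - h) ^ 2 ≤ C := by
  have hsub : axialChart hν p (y, z) - axialChart hν p (c, h) =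
      ((y - c : (ℝ ∙ ν)ᗮ) : V) + (z - h) • ν := by
    simp only [axialChart_apply, Submodule.coe_sub]
    module
  have hort := Submodule.mem_orthogonal_singleton_iff_inner_right.mp (y - c).2
  rw [spheroid, mem_ofPred_eq, hsub, norm_add_sq_real, inner_add_right, real_inner_smul_right,
    real_inner_smul_right, real_inner_comm, hort, norm_smul, real_inner_self_eq_norm_sq, hν,
    Submodule.coe_norm, Real.norm_eq_abs, mul_one, sq_abs]
  simp

theorem exists_isTiltSymmetric_preimage_axialChart {K : Set V} {p : V}
    (hν : ‖ν‖ = 1) (hdim : 1 < Module.finrank ℝ (ℝ ∙ ν)ᗮ) (hcompact : IsCompact K)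
    (hconvex : Convex ℝ K) (hp : p ∈ interior K)
    (hsymm : ∀ (u : V) (m : ℝ), ‖u‖ = 1 → ⟪u, ν⟫ = 0 → ∃ h, ∀ x ∈ K, ⟪u - m • ν, x - p⟫ = 0 →
      x + (2 * (h - ⟪ν, x - p⟫)) • (m • u + ν) ∈ K)
    (hnosymm : ¬ ∀ x ∈ K, x - (2 * ⟪ν, x - p⟫) • ν ∈ K) :
    ∃ e, IsTiltSymmetric (axialChart hν p ⁻¹' K) e := by
  refine exists_isTiltSymmetric hdim
    ((axialChart hν p).isClosedEmbedding.isCompact_preimage hcompact)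
    ((hconvex.translate_preimage_right p).linear_preimage (axialDecomposition hν).toLinearMap)
    ?_ (fun u m hu ↦ ?_) (fun hflip ↦ hnosymm fun x hx ↦ ?_)
  · rw [← (axialChart hν p).preimage_interior, mem_preimage]
    simpa [← Prod.mk_zero_zero, axialChart_apply] using hp
  · have huν := Submodule.mem_orthogonal_singleton_iff_inner_left.mp u.2
    obtain ⟨h, hh⟩ := hsymm u m hu huν
    refine ⟨h, fun y z huy hyz ↦ ?_⟩
    have hmem := hh (axialChart hν p (y, z)) hyz (by
      rw [inner_sub_left, real_inner_smul_left, inner_axialChart_sub, axialChart_apply,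
        add_sub_cancel_left, inner_add_right, real_inner_smul_right, huν, ← Submodule.coe_inner,
        huy]
      ring)
    rw [inner_axialChart_sub] at hmem
    rw [mem_preimage]
    convert hmem using 1
    simp only [axialChart_apply, Submodule.coe_add, Submodule.coe_smul]
    module
  · obtain ⟨⟨y, z⟩, rfl⟩ := (axialChart hν p).surjective x
    have hmem := mem_preimage.mp (hflip y z hx)
    rw [inner_axialChart_sub]
    convert hmem using 1
    simp only [axialChart_apply]
    module

theorem exists_eq_spheroid [FiniteDimensional ℝ V] {K : Set V} {p : V} (hν : ‖ν‖ = 1)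
    (hdim : 1 < Module.finrank ℝ (ℝ ∙ ν)ᗮ) (hcompact : IsCompact K) (hconvex : Convex ℝ K)
    (hp : p ∈ interior K)
    (hsymm : ∀ (u : V) (m : ℝ), ‖u‖ = 1 → ⟪u, ν⟫ = 0 → ∃ h, ∀ x ∈ K, ⟪u - m • ν, x - p⟫ = 0 →
      x + (2 * (h - ⟪ν, x - p⟫)) • (m • u + ν) ∈ K)
    (hnosymm : ¬ ∀ x ∈ K, x - (2 * ⟪ν, x - p⟫) • ν ∈ K) :
    ∃ (q : V) (κ C : ℝ), 0 < κ ∧ 0 < C ∧ K = spheroid q ν κ C := by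
  obtain ⟨e, he⟩ :=
    exists_isTiltSymmetric_preimage_axialChart hν hdim hcompact hconvex hp hsymm hnosymm
  obtain ⟨c, κ, C, hκ, hC, hmem⟩ := he.exists_mem_iff hdim
  refine ⟨axialChart hν p (c, e 0), κ, C, hκ, hC, ?_⟩
  ext x
  obtain ⟨⟨y, z⟩, rfl⟩ := (axialChart hν p).surjective x
  rw [← mem_preimage, hmem, axialChart_mem_spheroid_iff]

end AxialChart

section Euclidean

variable {n : ℕ} {K : Set (Euc n)} {ν p u : Euc n} {m : ℝ}

theorem IsSectionSymmPlane.exists_height {L : AffineSubspace ℝ (Euc n)} (hn : 3 ≤ n)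
    (hu : ‖u‖ = 1) (hν : ‖ν‖ = 1) (huν : ⟪u, ν⟫ = 0)
    (hrank : Module.finrank ℝ L.direction = n - 2) (hL : L.direction ≤ (ℝ ∙ ν)ᗮ)
    (hsymm : IsSectionSymmPlane K (.mk' p (ℝ ∙ (u - m • ν))ᗮ) L) :
    ∃ h, ∀ x ∈ K, ⟪u - m • ν, x - p⟫ = 0 →
      x + (2 * (h - ⟪ν, x - p⟫)) • (m • u + ν) ∈ K := by
  obtain ⟨hLP, f, hf, -, -, hfix, hfK⟩ := hsymm
  have hP {x : Euc n} : x ∈ AffineSubspace.mk' p (ℝ ∙ (u - m • ν))ᗮ ↔ ⟪u - m • ν, x - p⟫ = 0 := by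
    rw [AffineSubspace.mem_mk', Submodule.mem_orthogonal_singleton_iff_inner_right, vsub_eq_sub]
  have hfixL {x : Euc n} (hx : x ∈ L) : f x = x := (hfix.ge hx).2
  obtain ⟨q, hq⟩ : (L : Set (Euc n)).Nonempty := by
    rw [AffineSubspace.nonempty_iff_ne_bot]
    rintro rfl
    rw [AffineSubspace.direction_bot, finrank_bot] at hrank
    omega
  refine ⟨⟪ν, q - p⟫, fun x hxK hx ↦ ?_⟩
  have hfx : f x ∈ AffineSubspace.mk' p (ℝ ∙ (u - m • ν))ᗮ ∧ f x ∈ K :=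
    hfK.le (mem_image_of_mem f ⟨hP.mpr hx, hxK⟩)
  have hdisp : f x - x = ⟪ν, f x - x⟫ • (m • u + ν) := by
    refine sub_eq_smul_of_isometry hf hq (fun x ↦ hfixL) ?_ hu hν huν hL ?_ ?_
    · rw [finrank_euclideanSpace_fin]
      omega
    · simpa only [AffineSubspace.direction_mk'] using AffineSubspace.direction_le hLP
    · rw [← sub_sub_sub_cancel_right (f x) x p, inner_sub_right, hP.mp hfx.1, hx, sub_zero]
  have hxq : ⟪u - m • ν, x - q⟫ = 0 := by
    rw [← sub_sub_sub_cancel_right x q p, inner_sub_right, hx, hP.mp (hLP hq), sub_zero]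
  have hheight : ⟪ν, f x - x⟫ = 2 * (⟪ν, q - p⟫ - ⟪ν, x - p⟫) := by
    rw [inner_sub_eq_of_isometry hf hq (hfixL hq) (fun h ↦ hfix.le ⟨hP.mpr hx, h⟩) hu hν huν hL
      hxq hdisp, ← inner_sub_right, sub_sub_sub_cancel_right, ← neg_sub x q, inner_neg_right]
    ring
  rw [← hheight, ← hdisp, add_sub_cancel]
  exact hfx.2

theorem isSymmetryPlane_mk' (hν : ‖ν‖ = 1) (hK : ∀ x ∈ K, x - (2 * ⟪ν, x - p⟫) • ν ∈ K) :
    IsSymmetryPlane K (.mk' p (ℝ ∙ ν)ᗮ) := by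
  let f : Euc n → Euc n := fun x ↦ p + (ℝ ∙ ν)ᗮ.reflection (x - p)
  have hf (x : Euc n) : f x = x - (2 * ⟪ν, x - p⟫) • ν := by
    simp only [f, Submodule.reflection_apply, Submodule.starProjection_orthogonal_val,
      Submodule.starProjection_unit_singleton ℝ hν]
    module
  have hinvol : Function.Involutive f := fun x ↦ by simp [f]
  refine ⟨f, ⟨?_, hinvol.comp_self, ?_⟩, ?_⟩
  · exact .of_dist_eq fun x y ↦ by simp [f]
  · ext x
    rw [mem_ofPred_eq, SetLike.mem_coe, AffineSubspace.mem_mk', vsub_eq_sub,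
      ← Submodule.reflection_eq_self_iff, eq_sub_iff_add_eq']
  · have hmaps : f '' K ⊆ K := image_subset_iff.mpr fun x hx ↦ by
      simpa only [mem_preimage, hf] using hK x hx
    exact hmaps.antisymm fun x hx ↦ ⟨f x, hmaps ⟨x, hx, rfl⟩, hinvol x⟩

theorem isEllipsoidOfDim_spheroid {q : Euc n} {κ C : ℝ} (hν : ‖ν‖ = 1) (hκ : 0 < κ) (hC : 0 < C) :
    IsEllipsoidOfDim n (spheroid q ν κ C) := by
  obtain ⟨T, hT⟩ := exists_image_closedBall_eq_spheroid (q := q) hν hκ hC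
  exact ⟨T, ⊤, by simp, by simp [hT]⟩

end Euclidean

theorem exists_norm_eq_one_direction_eq {n : ℕ} (hn : 1 ≤ n) {H : AffineSubspace ℝ (Euc n)}
    (hH : IsHyperplane H) : ∃ ν : Euc n, ‖ν‖ = 1 ∧ H.direction = (ℝ ∙ ν)ᗮ := by
  have hrank : Module.finrank ℝ H.directionᗮ = 1 := by
    have := H.direction.finrank_add_finrank_orthogonal
    rw [hH.2, finrank_euclideanSpace_fin] at this
    omega
  have : Nontrivial H.directionᗮ := Module.nontrivial_of_finrank_pos (R := ℝ) (by omega)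
  obtain ⟨ν, hν⟩ := exists_norm_eq H.directionᗮ zero_le_one
  refine ⟨ν, hν, ?_⟩
  have hν0 : (ν : Euc n) ≠ 0 := by simp [← norm_ne_zero_iff, hν]
  have hspan : (ℝ ∙ (ν : Euc n)) = H.directionᗮ :=
    Submodule.eq_of_le_of_finrank_eq ((Submodule.span_singleton_le_iff_mem _ _).mpr ν.2)
      ((finrank_span_singleton hν0).trans hrank.symm)
  rw [hspan, Submodule.orthogonal_orthogonal]

theorem isHyperplane_mk' {n : ℕ} (p : Euc n) {w : Euc n} (hw : w ≠ 0) :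
    IsHyperplane (.mk' p (ℝ ∙ w)ᗮ) := by
  refine ⟨⟨p, AffineSubspace.self_mem_mk' _ _⟩, ?_⟩
  rw [AffineSubspace.direction_mk']
  have := (ℝ ∙ w).finrank_add_finrank_orthogonal
  rw [finrank_span_singleton hw, finrank_euclideanSpace_fin] at this
  omega

theorem stmt15_general {n : ℕ} (hn : 3 ≤ n) (K : Set (Euc n)) (hK : IsConvexBody K)
    (H : AffineSubspace ℝ (Euc n)) (hH : IsHyperplane H) (p : Euc n) (hp : p ∈ interior K)
    (hnotsym : ∀ H' : AffineSubspace ℝ (Euc n), H'.direction = H.direction →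
      IsSymmetryPlane K H' → p ∉ H')
    (hsec : ∀ P : AffineSubspace ℝ (Euc n), IsHyperplane P → p ∈ P →
      ∃ L : AffineSubspace ℝ (Euc n), Module.finrank ℝ L.direction = n - 2 ∧
        L.direction ≤ H.direction ∧ IsSectionSymmPlane K P L) :
    ∃ L : AffineSubspace ℝ (Euc n), (L : Set (Euc n)).Nonempty ∧
      L.direction = H.directionᗮ ∧ IsEllipsoidOfDim n K ∧
      ∀ f : Euc n ≃ᵃⁱ[ℝ] Euc n, IsRotationAbout f L → f '' K = K := by
  obtain ⟨ν, hν, hdir⟩ := exists_norm_eq_one_direction_eq (by omega) hH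
  rw [hdir] at hnotsym hsec ⊢
  have hsymm (u : Euc n) (m : ℝ) (hu : ‖u‖ = 1) (huν : ⟪u, ν⟫ = 0) : ∃ h, ∀ x ∈ K,
      ⟪u - m • ν, x - p⟫ = 0 → x + (2 * (h - ⟪ν, x - p⟫)) • (m • u + ν) ∈ K := by
    have hne : u - m • ν ≠ 0 := fun h ↦ by
      have := congrArg (⟪u, ·⟫) h
      simp [inner_sub_right, inner_smul_right, huν, hu] at this
    obtain ⟨L, hrank, hL, hLK⟩ := hsec _ (isHyperplane_mk' p hne) (AffineSubspace.self_mem_mk' _ _)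
    exact hLK.exists_height hn hu hν huν hrank hL
  have hnosymm : ¬ ∀ x ∈ K, x - (2 * ⟪ν, x - p⟫) • ν ∈ K := fun h ↦
    hnotsym _ (AffineSubspace.direction_mk' _ _) (isSymmetryPlane_mk' hν h)
      (AffineSubspace.self_mem_mk' _ _)
  obtain ⟨q, κ, C, hκ, hC, rfl⟩ :=
    exists_eq_spheroid hν (by rw [← hdir, hH.2]; omega) hK.1 hK.2.1 hp hsymm hnosymm
  refine ⟨.mk' q (ℝ ∙ ν)ᗮᗮ, ⟨q, AffineSubspace.self_mem_mk' _ _⟩,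
    AffineSubspace.direction_mk' _ _, isEllipsoidOfDim_spheroid hν hκ hC, fun f hf ↦ ?_⟩
  refine image_spheroid f (hf.1 _ (AffineSubspace.self_mem_mk' _ _)) (hf.1 _ ?_)
  simp [AffineSubspace.mem_mk', Submodule.mem_span_singleton_self]

/-- Main theorem in dimension 3: a Larman point `p` that is not a
revolution point, not on a plane of symmetry of `K` parallel to `H`, with all plane
sections through `p` having a line of symmetry parallel to `H`, forces `K` to be an
ellipsoid of revolution with axis perpendicular to `H`. -/
theorem stmt15 (K : Set (Euc 3)) (hK : IsConvexBody K)
    (H : AffineSubspace ℝ (Euc 3)) (hH : IsHyperplane H)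
    (p : Euc 3) (hp : p ∈ interior K)
    (hLarman : IsLarmanPoint K p) (hnotrev : ¬ IsRevolutionPoint K p)
    (hnotsym : ∀ H' : AffineSubspace ℝ (Euc 3), H'.direction = H.direction →
      IsSymmetryPlane K H' → p ∉ H')
    (hsec : ∀ P : AffineSubspace ℝ (Euc 3), IsHyperplane P → p ∈ P →
      ∃ L : AffineSubspace ℝ (Euc 3), Module.finrank ℝ L.direction = 1 ∧
        L.direction ≤ H.direction ∧ IsSectionSymmPlane K P L) :
    ∃ L : AffineSubspace ℝ (Euc 3), (L : Set (Euc 3)).Nonempty ∧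
      L.direction = H.directionᗮ ∧ IsEllipsoidOfDim 3 K ∧
      ∀ f : Euc 3 ≃ᵃⁱ[ℝ] Euc 3, IsRotationAbout f L → f '' K = K :=
  stmt15_general le_rfl K hK H hH p hp hnotsym hsec
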